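/- arXiv:2103.11418 — 2 statements merged into one kernel-verified Lean document; each statement's English description precedes it below -/
import Mathlib

section
/- Let $d \ge 2$ and let $E$ and $F$ be compact sets in $\mathbb{R}^d$ with $\dim_H(E) > \frac{d+1}{2}$ and $\dim_H(F) > \frac{d+1}{2}$. Then the set $P(E-F) := \{P(x-y) : x \in E, y \in F\}$ has non-empty interior, where $P(x) = x_1^2 + \cdots + x_{d-1}^2 + x_d$ for $x = (x_1, \ldots, x_d) \in \mathbb{R}^d$. -/
open ENNReal

/-- The parabolic polynomial `P(x) = x₁² + ⋯ + x_{d-1}² + x_d` on `ℝᵈ`. -/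
def parab (d : ℕ) (x : EuclideanSpace ℝ (Fin d)) : ℝ :=
  ∑ i : Fin d, if (i : ℕ) < d - 1 then x i ^ 2 else x i

/-!
Frostman's lemma provides measures `μ` on `E` and `ν` on `F` of exponents `s < dim E` and
`s' < dim F` with `s + s' > d + 1`. Let `m` be the law of `x - y` under `μ × ν`, so that
`charFun m = charFun μ * conj (charFun ν)`. Damp `m` by `exp (-‖x'‖²)`, where `x'` stands for the
first `d - 1` coordinates, and push it forward under `P`. The Gaussian integral in `x'` bounds the
characteristic function of the result at `τ` by the integral over `ξ'` of `|charFun m (ξ', τ)|`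
against the weight `(1 + τ²) ^ (-(d - 1) / 4) * exp (-‖ξ'‖² / (4 (1 + τ²)))`. This weight lives
where `‖ξ'‖ ≲ 1 + |τ|`, and is dominated there by a sum over dyadic scales `q ≤ 1` of
`q ^ ((d - 1) / 4) * exp (-q ‖ξ‖² / 16)`. By the Frostman condition the Gaussian average of
`|charFun m|` at scale `q` is `O(q ^ ((s + s') / 4 - d / 2))`, so the scales sum up exactly when
`s + s' > d + 1`. Hence the pushforward has an integrable characteristic function, and so a
continuous density. It is carried by the closed set `P(E - F)`, which therefore has interior.

Frostman's lemma is proved by duality. If `K` has positive `s`-dimensional content, then a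
fractional dyadic cover of a multiple of `K` costs at least that multiple of the content, by
rounding it to honest covers; the Riesz extension theorem turns this into a functional dominated by
the cost of covers, and Riesz–Markov into a measure.
-/

section

open MeasureTheory Filter Topology Set

/-- The Frostman condition of exponent `s`: balls of radius `r` have mass `O(r ^ s)`, uniformly in
the centre and in all `r > 0`. -/
def IsFrostman {X : Type*} [PseudoMetricSpace X] [MeasurableSpace X] (μ : Measure X) (s : ℝ) :
    Prop :=
  ∃ C : ℝ, ∀ (x : X) (r : ℝ), 0 < r → μ (Metric.closedBall x r) ≤ ENNReal.ofReal (C * r ^ s)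

section FractionalCover

variable {X V : Type*} (code : ℕ → X → V) (w : ℕ × V →₀ ℝ)

/-- The total weight that `w` puts on the cells containing `x` of level less than `n`, where the
cell `(k, v)` is `{x | code k x = v}`. -/
def weightBelow (n : ℕ) (x : X) : ℝ := ∑ j ∈ Finset.range n, w (j, code j x)

/-- The heights at which the cell `q` is selected in the rounding of a fractional cover: those
crossed when the weight of `q` is added to the weights of the cells above it. -/
def selectionHeights (q : ℕ × V) : Set ℝ :=
  {u | ∃ x, code q.1 x = q.2 ∧ u ∈ Ioc (weightBelow code w q.1 x) (weightBelow code w (q.1 + 1) x)}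

variable {code w}

theorem weightBelow_succ (n : ℕ) (x : X) :
    weightBelow code w (n + 1) x = weightBelow code w n x + w (n, code n x) :=
  Finset.sum_range_succ _ _

theorem selectionHeights_eq_Ioc
    (hcode : ∀ j k, j ≤ k → ∀ x y, code k x = code k y → code j x = code j y) (k : ℕ) (x : X) :
    selectionHeights code w (k, code k x) =
      Ioc (weightBelow code w k x) (weightBelow code w k x + w (k, code k x)) := by
  have weightBelow_congr {y : X} (hy : code k y = code k x) :
      weightBelow code w k y = weightBelow code w k x :=
    Finset.sum_congr rfl fun j hj => by
      rw [hcode j k (Finset.mem_range.1 hj).le y x hy]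
  ext u
  constructor
  · rintro ⟨y, hy, hu⟩
    rwa [weightBelow_succ, weightBelow_congr hy, hy] at hu
  · exact fun hu => ⟨x, rfl, by rwa [weightBelow_succ]⟩

theorem measurableSet_selectionHeights
    (hcode : ∀ j k, j ≤ k → ∀ x y, code k x = code k y → code j x = code j y) (q : ℕ × V) :
    MeasurableSet (selectionHeights code w q) := by
  obtain ⟨k, v⟩ := q
  by_cases hv : ∃ x, code k x = v
  · obtain ⟨x, rfl⟩ := hv
    exact selectionHeights_eq_Ioc hcode k x ▸ measurableSet_Ioc
  · convert MeasurableSet.empty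
    exact eq_empty_of_forall_notMem fun u ⟨x, hx, _⟩ => hv ⟨x, hx⟩

theorem volume_selectionHeights_le
    (hcode : ∀ j k, j ≤ k → ∀ x y, code k x = code k y → code j x = code j y) (q : ℕ × V) :
    volume (selectionHeights code w q) ≤ ENNReal.ofReal (w q) := by
  obtain ⟨k, v⟩ := q
  by_cases hv : ∃ x, code k x = v
  · obtain ⟨x, rfl⟩ := hv
    rw [selectionHeights_eq_Ioc hcode, Real.volume_Ioc, add_sub_cancel_left]
  · have : selectionHeights code w (k, v) = ∅ :=
      eq_empty_of_forall_notMem fun u ⟨x, hx, _⟩ => hv ⟨x, hx⟩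
    simp [this]

open Classical in
theorem exists_linearCombination_le_weightBelow (hw : 0 ≤ w) (x : X) :
    ∃ n, Finsupp.linearCombination ℝ (fun q : ℕ × V => {y | code q.1 y = q.2}.indicator 1) w x ≤
      weightBelow code w n x := by
  set cells := w.support.filter fun q => code q.1 x = q.2 with hcells
  have code_eq {q : ℕ × V} (hq : q ∈ cells) : (q.1, code q.1 x) = q :=
    Prod.ext rfl (Finset.mem_filter.1 hq).2
  obtain ⟨n, hn⟩ := (cells.image Prod.fst).exists_nat_subset_range
  refine ⟨n, ?_⟩
  calc Finsupp.linearCombination ℝ (fun q : ℕ × V => {y | code q.1 y = q.2}.indicator 1) w x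
      = ∑ q ∈ cells, w q := by
        simp [Finsupp.linearCombination_apply, Finsupp.sum, indicator_apply, hcells,
          Finset.sum_filter]
    _ = ∑ j ∈ cells.image Prod.fst, w (j, code j x) := by
        rw [Finset.sum_image fun p hp q hq hpq => by
          rw [← code_eq hp, ← code_eq hq, hpq]]
        exact Finset.sum_congr rfl fun q hq => by rw [code_eq hq]
    _ ≤ weightBelow code w n x :=
        Finset.sum_le_sum_of_subset_of_nonneg hn fun j _ _ => hw _

open Classical in
theorem exists_mem_selectionHeights (hw : 0 ≤ w) {x : X} {u : ℝ} (hu : 0 < u)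
    (hux : u ≤ Finsupp.linearCombination ℝ
      (fun q : ℕ × V => {y | code q.1 y = q.2}.indicator 1) w x) :
    ∃ q ∈ w.support, u ∈ selectionHeights code w q ∧ code q.1 x = q.2 := by
  obtain ⟨n, hn⟩ := exists_linearCombination_le_weightBelow hw x
  have hex : ∃ n, u ≤ weightBelow code w n x := ⟨n, hux.trans hn⟩
  obtain ⟨k, hk⟩ : ∃ k, Nat.find hex = k + 1 :=
    Nat.exists_eq_succ_of_ne_zero fun h0 => by
      have := Nat.find_spec hex
      rw [h0, weightBelow, Finset.sum_range_zero] at this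
      exact hu.not_ge this
  have hlt : weightBelow code w k x < u :=
    not_le.1 (Nat.find_min hex (hk ▸ k.lt_succ_self))
  have hle : u ≤ weightBelow code w (k + 1) x := hk ▸ Nat.find_spec hex
  refine ⟨(k, code k x), Finsupp.mem_support_iff.2 fun h0 => ?_, ⟨x, rfl, hlt, hle⟩, rfl⟩
  rw [weightBelow_succ, h0, add_zero] at hle
  exact hlt.not_ge hle

/- For each height `u ∈ (0, t]` the cells selected at `u` form a cover, whose cost is at least `H`;
averaging over `u` replaces each selection by the weight of the cell. -/
theorem mul_le_linearCombination_of_fractional_cover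
    (hcode : ∀ j k, j ≤ k → ∀ x y, code k x = code k y → code j x = code j y)
    {c : ℕ × V → ℝ} (hc : 0 ≤ c) {H : ℝ} (hH0 : 0 ≤ H)
    (hH : ∀ S : Finset (ℕ × V), (∀ x, ∃ q ∈ S, code q.1 x = q.2) → H ≤ ∑ q ∈ S, c q)
    (hw : 0 ≤ w) {t : ℝ}
    (ht : ∀ x, t ≤ Finsupp.linearCombination ℝ
      (fun q : ℕ × V => {y | code q.1 y = q.2}.indicator 1) w x) :
    t * H ≤ Finsupp.linearCombination ℝ c w := by
  classical
  set sel := selectionHeights code w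
  have cost_nonneg : ∀ q, 0 ≤ w q * c q := fun q => mul_nonneg (hw q) (hc q)
  have le_selected : ∀ u ∈ Ioc 0 t, ENNReal.ofReal H ≤
      ∑ q ∈ w.support, (sel q).indicator (fun _ => ENNReal.ofReal (c q)) u := fun u hu => by
    have hcover := hH (w.support.filter fun q => u ∈ sel q) fun x => by
      obtain ⟨q, hqw, hqu, hqx⟩ := exists_mem_selectionHeights hw hu.1 (hu.2.trans (ht x))
      exact ⟨q, Finset.mem_filter.2 ⟨hqw, hqu⟩, hqx⟩
    simp_rw [indicator_apply, ← Finset.sum_filter]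
    rw [← ENNReal.ofReal_sum_of_nonneg fun q _ => hc q]
    exact ENNReal.ofReal_le_ofReal hcover
  rw [Finsupp.linearCombination_apply, Finsupp.sum]
  refine (ENNReal.ofReal_le_ofReal_iff (Finset.sum_nonneg fun q _ => cost_nonneg q)).1 ?_
  calc ENNReal.ofReal (t * H)
      = ∫⁻ _ in Ioc 0 t, ENNReal.ofReal H := by
        rw [setLIntegral_const, Real.volume_Ioc, sub_zero, mul_comm, ENNReal.ofReal_mul hH0]
    _ ≤ ∫⁻ u in Ioc 0 t, ∑ q ∈ w.support, (sel q).indicator (fun _ => ENNReal.ofReal (c q)) u :=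
        setLIntegral_mono' measurableSet_Ioc le_selected
    _ ≤ ∫⁻ u, ∑ q ∈ w.support, (sel q).indicator (fun _ => ENNReal.ofReal (c q)) u :=
        setLIntegral_le_lintegral _ _
    _ = ∑ q ∈ w.support, ENNReal.ofReal (c q) * volume (sel q) := by
        have hsel := measurableSet_selectionHeights (w := w) hcode
        rw [lintegral_finsetSum _ fun q _ => measurable_const.indicator (hsel q)]
        exact Finset.sum_congr rfl fun q _ => lintegral_indicator_const (hsel q) _
    _ ≤ ∑ q ∈ w.support, ENNReal.ofReal (w q * c q) := by
        gcongr with q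
        rw [mul_comm (w q), ENNReal.ofReal_mul (hc q)]
        gcongr
        exact volume_selectionHeights_le hcode q
    _ = ENNReal.ofReal (∑ q ∈ w.support, w q • c q) :=
        (ENNReal.ofReal_sum_of_nonneg fun q _ => cost_nonneg q).symm

end FractionalCover

section Riesz

open CompactlySupported

variable {X ι : Type*} [TopologicalSpace X]

/-- The pairs `(f, w)` with `w ≥ 0` and `f + ∑ w i • φ i ≥ 0` pointwise. -/
def coverCone (φ : ι → X → ℝ) : PointedCone ℝ (C_c(X, ℝ) × (ι →₀ ℝ)) where
  carrier := {p | 0 ≤ p.2 ∧ ∀ x, 0 ≤ p.1 x + Finsupp.linearCombination ℝ φ p.2 x}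
  zero_mem' := by simp
  add_mem' {p q} hp hq := ⟨add_nonneg hp.1 hq.1, fun x => by
    have := add_nonneg (hp.2 x) (hq.2 x)
    simp only [Prod.fst_add, Prod.snd_add, map_add, Pi.add_apply,
      CompactlySupportedContinuousMap.coe_add]
    linarith⟩
  smul_mem' a p hp := ⟨smul_nonneg a.2 hp.1, fun x => by
    have := mul_nonneg a.2 (hp.2 x)
    change 0 ≤ a.1 • p.1 x + Finsupp.linearCombination ℝ φ (a.1 • p.2) x
    rw [map_smul, Pi.smul_apply, ← smul_add]
    exact this⟩

variable [CompactSpace X]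

theorem exists_linearMap_nonneg_coverCone (φ : ι → X → ℝ) (c : ι → ℝ) {H : ℝ}
    (hH0 : 0 < H)
    (hH : ∀ (t : ℝ) (w : ι →₀ ℝ), 0 ≤ w → (∀ x, t ≤ Finsupp.linearCombination ℝ φ w x) →
      t * H ≤ Finsupp.linearCombination ℝ c w) :
    ∃ g : C_c(X, ℝ) × (ι →₀ ℝ) →ₗ[ℝ] ℝ,
      (∀ (a : ℝ) (w : ι →₀ ℝ), g (a • CompactlySupportedContinuousMap.continuousMapEquiv 1, w) =
        a * H + Finsupp.linearCombination ℝ c w) ∧ ∀ p ∈ coverCone φ, 0 ≤ g p := by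
  set one : C_c(X, ℝ) := CompactlySupportedContinuousMap.continuousMapEquiv 1
  have one_apply : ∀ x, one x = 1 := fun x => rfl
  have one_ne_zero : one ≠ 0 := fun h => by
    have := hH 1 0 le_rfl fun x => by simpa [h] using one_apply x
    rw [map_zero] at this
    linarith
  let onConstants := (LinearPMap.mkSpanSingleton one H one_ne_zero).coprod
    ((Finsupp.linearCombination ℝ c).toPMap ⊤)
  have onConstants_apply (a : ℝ) (w : ι →₀ ℝ) (h : (a • one, w) ∈ onConstants.domain) :
      onConstants ⟨(a • one, w), h⟩ = a * H + Finsupp.linearCombination ℝ c w := by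
    rw [LinearPMap.coprod_apply]
    congr 1
    exact LinearPMap.mkSpanSingleton'_apply _ _ _ a h.1
  obtain ⟨g, hg, hg_nonneg⟩ := riesz_extension (coverCone φ) onConstants
    (by
      rintro ⟨⟨f, w⟩, h⟩ hp
      obtain ⟨a, rfl⟩ := Submodule.mem_span_singleton.1 h.1
      have := hH (-a) w hp.1 fun x => by
        have : 0 ≤ a * one x + Finsupp.linearCombination ℝ φ w x := hp.2 x
        rw [one_apply] at this
        linarith
      rw [onConstants_apply]
      linarith)
    (by
      rintro ⟨f, w⟩
      obtain ⟨B, hB⟩ := (isCompact_range f.continuous).bddBelow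
      refine ⟨⟨(-B • one, -w), Submodule.mem_span_singleton.2 ⟨-B, rfl⟩, trivial⟩,
        by simp, fun x => ?_⟩
      have : B ≤ f x := hB ⟨x, rfl⟩
      simpa [one_apply] using this)
  refine ⟨g, fun a w => ?_, hg_nonneg⟩
  have h : (a • one, w) ∈ onConstants.domain :=
    ⟨Submodule.mem_span_singleton.2 ⟨a, rfl⟩, trivial⟩
  exact (hg ⟨_, h⟩).trans (onConstants_apply a w h)

theorem exists_measure_of_fractional_cover [T2Space X] [MeasurableSpace X] [BorelSpace X]
    (φ : ι → X → ℝ) (c : ι → ℝ) {H : ℝ} (hH0 : 0 < H)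
    (hH : ∀ (t : ℝ) (w : ι →₀ ℝ), 0 ≤ w → (∀ x, t ≤ Finsupp.linearCombination ℝ φ w x) →
      t * H ≤ Finsupp.linearCombination ℝ c w) :
    ∃ μ : Measure X, IsFiniteMeasure μ ∧ μ ≠ 0 ∧
      ∀ (f : C(X, ℝ)) (w : ι →₀ ℝ), 0 ≤ w → (∀ x, f x ≤ Finsupp.linearCombination ℝ φ w x) →
        ∫ x, f x ∂μ ≤ Finsupp.linearCombination ℝ c w := by
  obtain ⟨g, hg_one, hg_nonneg⟩ := exists_linearMap_nonneg_coverCone φ c hH0 hH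
  have hg_le (f : C_c(X, ℝ)) (w : ι →₀ ℝ) (hw : 0 ≤ w)
      (hfw : ∀ x, f x ≤ Finsupp.linearCombination ℝ φ w x) :
      g (f, 0) ≤ Finsupp.linearCombination ℝ c w := by
    have h1 := hg_nonneg (-f, w) ⟨hw, fun x => by simpa using hfw x⟩
    have h2 := hg_one 0 w
    have h3 : g (f, 0) + g (-f, w) = g (0, w) := by rw [← map_add]; simp
    rw [zero_smul, zero_mul, zero_add] at h2
    linarith
  let Λ : C_c(X, ℝ) →ₚ[ℝ] ℝ := PositiveLinearMap.mk₀ (g ∘ₗ LinearMap.inl ℝ _ _) fun f hf =>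
    hg_nonneg _ ⟨le_rfl, fun x => by simpa using hf x⟩
  refine ⟨RealRMK.rieszMeasure Λ, inferInstance, fun h0 => ?_, fun f w hw hfw => ?_⟩
  · have h1 := RealRMK.integral_rieszMeasure Λ
      (CompactlySupportedContinuousMap.continuousMapEquiv 1)
    have h2 := hg_one 1 0
    rw [h0, integral_zero_measure] at h1
    rw [one_smul, one_mul, map_zero, add_zero] at h2
    exact hH0.ne (h1.trans h2)
  · have := RealRMK.integral_rieszMeasure Λ (CompactlySupportedContinuousMap.continuousMapEquiv f)
    exact this.trans_le (hg_le _ w hw hfw)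

end Riesz

section Dyadic

variable {ι : Type*}

/-- The index of the dyadic cube of side `2⁻ᵏ` containing `x`. -/
noncomputable def dyadicCode (k : ℕ) (x : EuclideanSpace ℝ ι) : ι → ℤ :=
  fun i => ⌊(2 : ℝ) ^ k * x i⌋

theorem dyadicCode_eq_of_le {j k : ℕ} (hjk : j ≤ k) {x y : EuclideanSpace ℝ ι}
    (h : dyadicCode k x = dyadicCode k y) : dyadicCode j x = dyadicCode j y := by
  obtain ⟨m, rfl⟩ := Nat.exists_eq_add_of_le hjk
  have coarsen (z : EuclideanSpace ℝ ι) (i : ι) :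
      dyadicCode j z i = dyadicCode (j + m) z i / ((2 ^ m : ℕ) : ℤ) := by
    rw [dyadicCode, ← Int.natCast_mul_floor_div_cancel (n := 2 ^ m) (by positivity), dyadicCode]
    push_cast
    ring_nf
  funext i
  rw [coarsen, coarsen, h]

/-- The dyadic cube of side `2⁻ᵏ` and index `v`, for `q = (k, v)`. -/
def dyadicCube (q : ℕ × (ι → ℤ)) : Set (EuclideanSpace ℝ ι) := {x | dyadicCode q.1 x = q.2}

variable [Fintype ι]

theorem dist_le_of_dyadicCode_eq {k : ℕ} {x y : EuclideanSpace ℝ ι}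
    (h : dyadicCode k x = dyadicCode k y) : dist x y ≤ √(Fintype.card ι) * ((2 : ℝ) ^ k)⁻¹ := by
  have hk : (0 : ℝ) < 2 ^ k := by positivity
  have dist_coord_le (i : ι) : dist (x i) (y i) ≤ ((2 : ℝ) ^ k)⁻¹ := by
    have := Int.abs_sub_lt_one_of_floor_eq_floor (congrFun h i)
    rw [← mul_sub, abs_mul, abs_of_pos hk] at this
    rw [Real.dist_eq, ← one_div, le_div_iff₀' hk]
    exact this.le
  rw [EuclideanSpace.dist_eq]
  calc √(∑ i, dist (x i) (y i) ^ 2) ≤ √(∑ _i : ι, (((2 : ℝ) ^ k)⁻¹) ^ 2) := by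
        gcongr with i
        exact dist_coord_le i
    _ = √(Fintype.card ι) * ((2 : ℝ) ^ k)⁻¹ := by
        rw [Finset.sum_const, Finset.card_univ, nsmul_eq_mul, Real.sqrt_mul (by positivity),
          Real.sqrt_sq (by positivity)]

theorem ediam_dyadicCube_le (q : ℕ × (ι → ℤ)) :
    Metric.ediam (dyadicCube q) ≤
      ENNReal.ofReal (√(Fintype.card ι) * ((2 : ℝ) ^ q.1)⁻¹) :=
  Metric.ediam_le fun x hx y hy => by
    rw [edist_dist]
    exact ENNReal.ofReal_le_ofReal (dist_le_of_dyadicCode_eq (hx.trans hy.symm))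

theorem ediam_dyadicCube_rpow_le {s : ℝ} (hs : 0 ≤ s) (q : ℕ × (ι → ℤ)) :
    Metric.ediam (dyadicCube q) ^ s ≤
      ENNReal.ofReal (√(Fintype.card ι) ^ s * ((2 : ℝ) ^ q.1) ^ (-s)) := by
  refine (ENNReal.rpow_le_rpow (ediam_dyadicCube_le q) hs).trans_eq ?_
  rw [ENNReal.ofReal_rpow_of_nonneg (by positivity) hs,
    Real.mul_rpow (by positivity) (by positivity),
    Real.inv_rpow (by positivity), Real.rpow_neg (by positivity)]

/- If the costs `∑ (2 ^ k) ^ (-s)` of dyadic covers `S j` tend to zero, so do the mesh sizes of the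
covers, and the covers witness that the `s`-dimensional Hausdorff measure is finite. -/
theorem exists_pos_le_sum_of_dyadic_cover {K : Set (EuclideanSpace ℝ ι)} {s : NNReal} (hs : 0 < s)
    (hK : (s : ℝ≥0∞) < dimH K) :
    ∃ H : ℝ, 0 < H ∧ ∀ S : Finset (ℕ × (ι → ℤ)),
      (∀ x ∈ K, ∃ q ∈ S, x ∈ dyadicCube q) → H ≤ ∑ q ∈ S, ((2 : ℝ) ^ q.1) ^ (-(s : ℝ)) := by
  by_contra! cheap
  choose S S_covers S_cost using fun j : ℕ => cheap (1 / ((j : ℝ) + 1)) (by positivity)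
  have hs0 : (0 : ℝ) < s := by exact_mod_cast hs
  have side_le (j : ℕ) (q) (hq : q ∈ S j) :
      ((2 : ℝ) ^ q.1)⁻¹ ≤ (1 / ((j : ℝ) + 1)) ^ (s : ℝ)⁻¹ := by
    rw [← Real.rpow_le_rpow_iff (z := s) (by positivity) (by positivity) hs0,
      Real.rpow_inv_rpow (by positivity) hs0.ne', Real.inv_rpow (by positivity),
      ← Real.rpow_neg (by positivity)]
    exact (Finset.single_le_sum (f := fun q : ℕ × (ι → ℤ) => ((2 : ℝ) ^ q.1) ^ (-(s : ℝ)))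
      (fun q _ => by positivity) hq).trans (S_cost j).le
  have mesh_tendsto : Tendsto (fun j : ℕ => ENNReal.ofReal
      (√(Fintype.card ι) * (1 / ((j : ℝ) + 1)) ^ (s : ℝ)⁻¹)) atTop (𝓝 0) := by
    have := (tendsto_one_div_add_atTop_nhds_zero_nat (𝕜 := ℝ)).rpow_const
      (p := (s : ℝ)⁻¹) (Or.inr (by positivity))
    rw [Real.zero_rpow (by positivity)] at this
    simpa using ENNReal.tendsto_ofReal (this.const_mul √(Fintype.card ι))
  have sum_ediam_le (j : ℕ) : ∑ q : S j, Metric.ediam (dyadicCube q.1) ^ (s : ℝ) ≤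
      ENNReal.ofReal (√(Fintype.card ι) ^ (s : ℝ)) := by
    refine (Finset.sum_le_sum fun q _ =>
      ediam_dyadicCube_rpow_le hs0.le q.1).trans ?_
    rw [← ENNReal.ofReal_sum_of_nonneg fun _ _ => by positivity, ← Finset.mul_sum,
      Finset.sum_coe_sort (S j) fun q => ((2 : ℝ) ^ q.1) ^ (-(s : ℝ))]
    refine ENNReal.ofReal_le_ofReal (mul_le_of_le_one_right (by positivity) ?_)
    exact (S_cost j).le.trans <| (one_div_le_one_div_of_le one_pos (by simp)).trans_eq one_div_one
  have measure_le := Measure.hausdorffMeasure_le_liminf_sum (s : ℝ) K (l := atTop) _ mesh_tendsto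
    (fun j (q : S j) => dyadicCube q.1)
    (.of_forall fun j q => (ediam_dyadicCube_le _).trans <| ENNReal.ofReal_le_ofReal <|
      mul_le_mul_of_nonneg_left (side_le j q.1 q.2) (by positivity))
    (.of_forall fun j x hx => by
      obtain ⟨q, hq, hqx⟩ := S_covers j x hx
      exact mem_iUnion.2 ⟨⟨q, hq⟩, hqx⟩)
  rw [hausdorffMeasure_of_lt_dimH hK] at measure_le
  have liminf_le := liminf_le_of_frequently_le' (Frequently.of_forall (f := atTop) sum_ediam_le)
  exact ENNReal.ofReal_ne_top (top_le_iff.1 (measure_le.trans liminf_le))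

end Dyadic

theorem IsFrostman.of_le_one {X : Type*} [PseudoMetricSpace X] [MeasurableSpace X] {μ : Measure X}
    [IsFiniteMeasure μ] {s C : ℝ} (hs : 0 ≤ s)
    (hC : ∀ x r, 0 < r → r ≤ 1 → μ (Metric.closedBall x r) ≤ ENNReal.ofReal (C * r ^ s)) :
    IsFrostman μ s := by
  refine ⟨max C (μ.real univ), fun x r hr => ?_⟩
  rcases le_total r 1 with hr1 | hr1
  · refine (hC x r hr hr1).trans (ENNReal.ofReal_le_ofReal ?_)
    gcongr
    exact le_max_left _ _
  · calc μ (Metric.closedBall x r) ≤ μ univ := measure_mono (subset_univ _)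
      _ = ENNReal.ofReal (μ.real univ) := (ofReal_measureReal).symm
      _ ≤ ENNReal.ofReal (max C (μ.real univ) * r ^ s) := ENNReal.ofReal_le_ofReal <|
        (le_max_right _ _).trans <| le_mul_of_one_le_right
          (measureReal_nonneg.trans (le_max_right _ _)) (Real.one_le_rpow hr1 hs)

section Dyadic

variable {ι : Type*}

theorem linearCombination_dyadicCube_sum_single (k : ℕ) (T : Finset (ι → ℤ))
    (x : EuclideanSpace ℝ ι) :
    Finsupp.linearCombination ℝ (fun q => (dyadicCube q).indicator fun _ => (1 : ℝ))
      (∑ v ∈ T, Finsupp.single (k, v) 1) x =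
        (T : Set (ι → ℤ)).indicator (fun _ => 1) (dyadicCode k x) := by
  classical
  simp [map_sum, Finsupp.linearCombination_single, indicator_apply, dyadicCube]

variable [Fintype ι]

theorem dyadicCode_mem_Icc [DecidableEq ι] {k : ℕ} {x y : EuclideanSpace ℝ ι}
    (hxy : dist y x < 2 * (1 / 2 : ℝ) ^ k) :
    dyadicCode k y ∈ Finset.Icc (dyadicCode k x - 2) (dyadicCode k x + 2) := by
  have close (i : ι) : |(2 : ℝ) ^ k * y i - 2 ^ k * x i| < 2 := by
    rw [← mul_sub, abs_mul, abs_of_pos (by positivity)]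
    calc (2 : ℝ) ^ k * |y i - x i| ≤ 2 ^ k * dist y x := by
          rw [dist_eq_norm]
          gcongr
          exact PiLp.norm_apply_le (y - x) i
      _ < 2 ^ k * (2 * (1 / 2 : ℝ) ^ k) := by gcongr
      _ = 2 := by rw [mul_left_comm, ← mul_pow]; norm_num
  refine Finset.mem_Icc.2 ⟨fun i => ?_, fun i => ?_⟩
  · exact (Int.floor_sub_ofNat _ 2).symm.trans_le <|
      Int.floor_le_floor (by linarith [(abs_lt.1 (close i)).1])
  · exact (Int.floor_le_floor (by linarith [(abs_lt.1 (close i)).2])).trans_eq <|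
      Int.floor_add_ofNat _ 2

theorem exists_dyadic_cover_ball {s : ℝ} (hs : 0 ≤ s) (x : EuclideanSpace ℝ ι) {r : ℝ}
    (hr : 0 < r) (hr1 : r ≤ 1) :
    ∃ w : ℕ × (ι → ℤ) →₀ ℝ, 0 ≤ w ∧
      (∀ y, (Metric.ball x (2 * r)).indicator (fun _ => 1) y ≤
        Finsupp.linearCombination ℝ (fun q => (dyadicCube q).indicator fun _ => (1 : ℝ)) w y) ∧
      Finsupp.linearCombination ℝ (fun q => ((2 : ℝ) ^ q.1) ^ (-s)) w ≤
        5 ^ Fintype.card ι * 2 ^ s * r ^ s := by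
  classical
  obtain ⟨k, hkr, hrk⟩ := exists_nat_pow_near_of_lt_one hr hr1 one_half_pos one_half_lt_one
  set T := Finset.Icc (dyadicCode k x - 2) (dyadicCode k x + 2)
  have card_T : T.card = 5 ^ Fintype.card ι := by
    have (i : ι) : dyadicCode k x i + 2 + 1 - (dyadicCode k x i - 2) = 5 := by ring
    simp [T, Pi.card_Icc, this]
  refine ⟨∑ v ∈ T, Finsupp.single (k, v) 1, Finset.sum_nonneg fun v _ =>
    Finsupp.single_nonneg.2 zero_le_one, fun y => ?_, ?_⟩
  · rw [linearCombination_dyadicCube_sum_single]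
    refine indicator_le' (fun y hy => ?_) (fun y _ => indicator_nonneg (fun _ _ => zero_le_one) _) y
    rw [indicator_of_mem (dyadicCode_mem_Icc (hy.trans_le (by gcongr)))]
  · calc Finsupp.linearCombination ℝ (fun q : ℕ × (ι → ℤ) => ((2 : ℝ) ^ q.1) ^ (-s))
          (∑ v ∈ T, Finsupp.single (k, v) 1)
        = 5 ^ Fintype.card ι * ((2 : ℝ) ^ k) ^ (-s) := by
          simp only [map_sum, Finsupp.linearCombination_single, one_smul, Finset.sum_const, card_T,
            nsmul_eq_mul, Nat.cast_pow, Nat.cast_ofNat]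
      _ = 5 ^ Fintype.card ι * 2 ^ s * ((1 / 2 : ℝ) ^ (k + 1)) ^ s := by
          rw [mul_assoc, ← Real.mul_rpow (by positivity) (by positivity),
            Real.rpow_neg (by positivity), ← Real.inv_rpow (by positivity), ← one_div,
            ← one_div_pow]
          ring_nf
      _ ≤ 5 ^ Fintype.card ι * 2 ^ s * r ^ s := by gcongr

theorem exists_measure_integral_le_dyadic_cost {K : Set (EuclideanSpace ℝ ι)} (hK : IsCompact K)
    {s : NNReal} (hs : 0 < s) (hsK : (s : ℝ≥0∞) < dimH K) :
    ∃ μ : Measure (EuclideanSpace ℝ ι), IsFiniteMeasure μ ∧ μ ≠ 0 ∧ μ Kᶜ = 0 ∧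
      ∀ (f : C(EuclideanSpace ℝ ι, ℝ)) (w : ℕ × (ι → ℤ) →₀ ℝ), 0 ≤ w →
        (∀ x, f x ≤ Finsupp.linearCombination ℝ
          (fun q => (dyadicCube q).indicator fun _ => (1 : ℝ)) w x) →
        ∫ x, f x ∂μ ≤ Finsupp.linearCombination ℝ (fun q => ((2 : ℝ) ^ q.1) ^ (-(s : ℝ))) w := by
  obtain ⟨H, hH0, hH⟩ := exists_pos_le_sum_of_dyadic_cover hs hsK
  have : CompactSpace K := isCompact_iff_compactSpace.1 hK
  obtain ⟨μ, hμ, hμ0, integral_le⟩ := exists_measure_of_fractional_cover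
    (fun q => {y : K | dyadicCode q.1 y.1 = q.2}.indicator 1)
    (fun q : ℕ × (ι → ℤ) => ((2 : ℝ) ^ q.1) ^ (-(s : ℝ))) hH0 fun t w hw ht =>
      mul_le_linearCombination_of_fractional_cover (code := fun k (y : K) => dyadicCode k y.1)
        (fun j k hjk x y => dyadicCode_eq_of_le hjk) (fun q => by positivity) hH0.le
        (fun S hS => hH S fun x hx => hS ⟨x, hx⟩) hw ht
  refine ⟨μ.map Subtype.val, inferInstance, ?_, ?_, fun f w hw hfw => ?_⟩
  · rwa [Ne, Measure.map_eq_zero_iff measurable_subtype_coe.aemeasurable]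
  · rw [Measure.map_apply measurable_subtype_coe hK.measurableSet.compl]
    simp
  · rw [(MeasurableEmbedding.subtype_coe hK.measurableSet).integral_map]
    refine integral_le (f.restrict K) w hw fun x => (hfw x).trans_eq ?_
    simp [Finsupp.linearCombination_apply, Finsupp.sum, indicator_apply, dyadicCube]

theorem exists_isFrostman_of_lt_dimH_euclideanSpace {K : Set (EuclideanSpace ℝ ι)}
    (hK : IsCompact K) {s : NNReal} (hs : 0 < s) (hsK : (s : ℝ≥0∞) < dimH K) :
    ∃ μ : Measure (EuclideanSpace ℝ ι), IsFiniteMeasure μ ∧ μ ≠ 0 ∧ μ Kᶜ = 0 ∧ IsFrostman μ s := by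
  obtain ⟨μ, hμ, hμ0, hμK, integral_le⟩ := exists_measure_integral_le_dyadic_cost hK hs hsK
  refine ⟨μ, hμ, hμ0, hμK, .of_le_one s.2 (C := 2 * (5 ^ Fintype.card ι * 2 ^ (s : ℝ)))
    fun x r hr hr1 => ?_⟩
  obtain ⟨w, hw, ball_le, cost_le⟩ := exists_dyadic_cover_ball s.2 x hr hr1
  let bump : C(EuclideanSpace ℝ ι, ℝ) := ⟨fun y => max 0 (1 - dist y x / (2 * r)), by fun_prop⟩
  have bump_nonneg (y) : 0 ≤ bump y := le_max_left _ _
  have bump_le_one (y) : bump y ≤ 1 := max_le zero_le_one (sub_le_self _ (by positivity))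
  have bump_le (y) : bump y ≤ (Metric.ball x (2 * r)).indicator (fun _ => 1) y :=
    le_indicator (fun y _ => bump_le_one y) (fun y hy => max_le le_rfl <| sub_nonpos.2 <|
      (one_le_div₀ (by positivity)).2 (not_lt.1 hy)) y
  have le_bump : ∀ y ∈ Metric.closedBall x r, 1 / 2 ≤ bump y := fun y hy => by
    have : dist y x / (2 * r) ≤ 1 / 2 := by
      rw [div_le_iff₀ (by positivity)]
      linarith [Metric.mem_closedBall.1 hy]
    exact le_max_of_le_right (by linarith)
  have bump_integrable : Integrable bump μ :=
    .of_bound bump.continuous.aestronglyMeasurable 1 <| .of_forall fun y => by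
      rw [Real.norm_of_nonneg (bump_nonneg y)]
      exact bump_le_one y
  have half_measure_le : 1 / 2 * μ.real (Metric.closedBall x r) ≤
      5 ^ Fintype.card ι * 2 ^ (s : ℝ) * r ^ (s : ℝ) :=
    calc 1 / 2 * μ.real (Metric.closedBall x r) ≤ 1 / 2 * μ.real {y | 1 / 2 ≤ bump y} :=
          mul_le_mul_of_nonneg_left (measureReal_mono le_bump) one_half_pos.le
      _ ≤ ∫ y, bump y ∂μ :=
          mul_meas_ge_le_integral_of_nonneg (.of_forall bump_nonneg) bump_integrable _
      _ ≤ _ := (integral_le bump w hw fun y => (bump_le y).trans (ball_le y)).trans cost_le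
  rw [← ofReal_measureReal]
  exact ENNReal.ofReal_le_ofReal (by linarith)

end Dyadic

theorem exists_isFrostman_of_lt_dimH {V : Type*} [NormedAddCommGroup V] [InnerProductSpace ℝ V]
    [FiniteDimensional ℝ V] [MeasurableSpace V] [BorelSpace V] {K : Set V} (hK : IsCompact K)
    {s : NNReal} (hs : 0 < s) (hsK : (s : ℝ≥0∞) < dimH K) :
    ∃ μ : Measure V, IsFiniteMeasure μ ∧ μ ≠ 0 ∧ μ Kᶜ = 0 ∧ IsFrostman μ s := by
  let e := (stdOrthonormalBasis ℝ V).repr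
  obtain ⟨μ, hμ, hμ0, hμK, C, hC⟩ := exists_isFrostman_of_lt_dimH_euclideanSpace
    (hK.image e.continuous) hs (by rwa [e.isometry.dimH_image])
  have he : Measurable e.symm := e.symm.continuous.measurable
  refine ⟨μ.map e.symm, inferInstance, ?_, ?_, C, fun x r hr => ?_⟩
  · rwa [Ne, Measure.map_eq_zero_iff he.aemeasurable]
  · rwa [Measure.map_apply he hK.measurableSet.compl, preimage_compl,
      ← e.image_eq_preimage_symm]
  · rw [Measure.map_apply he Metric.isClosed_closedBall.measurableSet,
      e.symm.preimage_closedBall]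
    exact hC _ r hr

theorem summable_exp_neg_nat_mul_rpow (s : ℝ) :
    Summable fun j : ℕ => Real.exp (-j) * ((j : ℝ) + 1) ^ s := by
  have := ((Real.summable_pow_mul_exp_neg_nat_mul ⌈s⌉₊ one_pos).comp_injective
    (add_left_injective 1)).mul_left (Real.exp 1)
  refine this.of_nonneg_of_le (fun j => by positivity) fun j => ?_
  calc Real.exp (-j) * ((j : ℝ) + 1) ^ s ≤ Real.exp (-j) * ((j : ℝ) + 1) ^ ⌈s⌉₊ := by
        gcongr
        rw [← Real.rpow_natCast]
        exact Real.rpow_le_rpow_of_exponent_le (by simp) (Nat.le_ceil s)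
    _ = _ := by
        have : Real.exp (-j) = Real.exp 1 * Real.exp (-1 * (j + 1)) := by
          rw [← Real.exp_add]; ring_nf
        simp only [this, Function.comp, Nat.cast_add, Nat.cast_one]
        ring

theorem ofReal_exp_neg_sq_dist_le_tsum {X : Type*} [PseudoMetricSpace X] (x y : X) {r : ℝ}
    (hr : 0 < r) :
    ENNReal.ofReal (Real.exp (-(dist y x / r) ^ 2)) ≤
      ∑' j : ℕ, (Metric.closedBall x ((j + 1) * r)).indicator
        (fun _ => ENNReal.ofReal (Real.exp (-j))) y := by
  set j := ⌊dist y x / r⌋₊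
  have hj : (j : ℝ) ≤ dist y x / r := Nat.floor_le (by positivity)
  have hj1 : dist y x / r ≤ j + 1 := (Nat.lt_floor_add_one _).le
  refine le_trans ?_ (ENNReal.le_tsum j)
  rw [indicator_of_mem (Metric.mem_closedBall.2 ((div_le_iff₀ hr).1 hj1))]
  refine ENNReal.ofReal_le_ofReal (Real.exp_le_exp.2 (neg_le_neg ?_))
  calc (j : ℝ) ≤ (j : ℝ) ^ 2 := by exact_mod_cast Nat.le_self_pow two_ne_zero j
    _ ≤ (dist y x / r) ^ 2 := by gcongr

theorem IsFrostman.exists_integral_exp_neg_sq_dist_le {X : Type*} [PseudoMetricSpace X]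
    [MeasurableSpace X] [OpensMeasurableSpace X] {μ : Measure X} {s : ℝ} (h : IsFrostman μ s) :
    ∃ A, ∀ x r, 0 < r → ∫ y, Real.exp (-(dist y x / r) ^ 2) ∂μ ≤ A * r ^ s := by
  obtain ⟨C, hC⟩ := h
  have summable := summable_exp_neg_nat_mul_rpow s
  refine ⟨|C| * ∑' j : ℕ, Real.exp (-j) * ((j : ℝ) + 1) ^ s, fun x r hr => ?_⟩
  have term_le (j : ℕ) : ENNReal.ofReal (Real.exp (-j)) * μ (Metric.closedBall x ((j + 1) * r)) ≤
      ENNReal.ofReal (|C| * r ^ s * (Real.exp (-j) * ((j : ℝ) + 1) ^ s)) := by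
    refine (mul_le_mul_right (hC x _ (by positivity)) _).trans ?_
    rw [← ENNReal.ofReal_mul (by positivity), Real.mul_rpow (by positivity) hr.le]
    refine ENNReal.ofReal_le_ofReal ?_
    calc Real.exp (-j) * (C * (((j : ℝ) + 1) ^ s * r ^ s))
        ≤ Real.exp (-j) * (|C| * (((j : ℝ) + 1) ^ s * r ^ s)) := by gcongr; exact le_abs_self C
      _ = _ := by ring
  rw [mul_right_comm, ← tsum_mul_left]
  rw [integral_eq_lintegral_of_nonneg_ae (.of_forall fun y => (Real.exp_pos _).le)
    (by fun_prop)]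
  refine ENNReal.toReal_le_of_le_ofReal
    (tsum_nonneg fun j => by positivity) ?_
  calc ∫⁻ y, ENNReal.ofReal (Real.exp (-(dist y x / r) ^ 2)) ∂μ
      ≤ ∫⁻ y, ∑' j : ℕ, (Metric.closedBall x ((j + 1) * r)).indicator
          (fun _ => ENNReal.ofReal (Real.exp (-j))) y ∂μ :=
        lintegral_mono fun y => ofReal_exp_neg_sq_dist_le_tsum x y hr
    _ = ∑' j : ℕ, ENNReal.ofReal (Real.exp (-j)) * μ (Metric.closedBall x ((j + 1) * r)) := by
        have hball (j : ℕ) : MeasurableSet (Metric.closedBall x (((j : ℝ) + 1) * r)) :=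
          Metric.isClosed_closedBall.measurableSet
        rw [lintegral_tsum fun j => (measurable_const.indicator (hball j)).aemeasurable]
        simp_rw [lintegral_indicator_const (hball _)]
    _ ≤ ENNReal.ofReal (∑' j : ℕ, |C| * r ^ s * (Real.exp (-j) * ((j : ℝ) + 1) ^ s)) := by
        rw [ENNReal.ofReal_tsum_of_nonneg (fun j => by positivity) (summable.mul_left _)]
        exact ENNReal.tsum_le_tsum term_le

open Complex ComplexConjugate

section Gaussian

variable {V : Type*} [NormedAddCommGroup V] [InnerProductSpace ℝ V] [FiniteDimensional ℝ V]
  [MeasurableSpace V] [BorelSpace V]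

theorem integral_cexp_neg_mul_sq_norm_mul_integral {Y : Type*} [MeasurableSpace Y] {κ : Measure Y}
    [SFinite κ] {φ : Y → V} (hφ : Measurable φ) {g : Y → ℂ} (hg : Integrable g κ) {b : ℂ}
    (hb : 0 < b.re) :
    ∫ ξ : V, cexp (-b * ‖ξ‖ ^ 2) * ∫ y, g y * cexp (inner ℝ (φ y) ξ * I) ∂κ =
      (Real.pi / b) ^ (Module.finrank ℝ V / 2 : ℂ) *
        ∫ y, g y * cexp (-‖φ y‖ ^ 2 / (4 * b)) ∂κ := by
  have gaussian_integrable : Integrable fun ξ : V => cexp (-b * ‖ξ‖ ^ 2) := by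
    simpa using GaussianFourier.integrable_cexp_neg_mul_sq_norm_add hb 0 (0 : V)
  have integrable : Integrable (Function.uncurry fun (ξ : V) (y : Y) =>
      cexp (-b * ‖ξ‖ ^ 2) * (g y * cexp (inner ℝ (φ y) ξ * I))) (volume.prod κ) := by
    have phase_norm (z : V × Y) : ‖cexp (inner ℝ (φ z.2) z.1 * I)‖ = 1 := norm_exp_ofReal_mul_I _
    refine ((gaussian_integrable.mul_prod hg).mul_bdd (c := 1)
      (g := fun z : V × Y => cexp (inner ℝ (φ z.2) z.1 * I)) ?_ ?_).congr ?_
    · exact Measurable.aestronglyMeasurable (by fun_prop)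
    · exact .of_forall fun z => (phase_norm z).le
    · exact .of_forall fun z => mul_assoc _ _ _
  calc _ = ∫ ξ : V, ∫ y, cexp (-b * ‖ξ‖ ^ 2) * (g y * cexp (inner ℝ (φ y) ξ * I)) ∂κ := by
        simp_rw [integral_const_mul]
    _ = ∫ y, (∫ ξ : V, cexp (-b * ‖ξ‖ ^ 2) * (g y * cexp (inner ℝ (φ y) ξ * I))) ∂κ :=
        integral_integral_swap integrable
    _ = ∫ y, (Real.pi / b) ^ (Module.finrank ℝ V / 2 : ℂ) *
          (g y * cexp (-‖φ y‖ ^ 2 / (4 * b))) ∂κ := by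
        congr 1 with y
        have := GaussianFourier.integral_cexp_neg_mul_sq_norm_add hb I (φ y)
        rw [I_sq, neg_one_mul] at this
        rw [mul_left_comm, ← this, ← integral_const_mul]
        congr 1 with ξ
        rw [Complex.exp_add, mul_comm I]
        ring
    _ = _ := integral_const_mul _ _

theorem integral_exp_neg_mul_sq_norm_mul_charFun (κ : Measure V) [IsFiniteMeasure κ] {b : ℝ}
    (hb : 0 < b) :
    ∫ ξ : V, cexp (-b * ‖ξ‖ ^ 2) * charFun κ ξ =
      ((Real.pi / b) ^ (Module.finrank ℝ V / 2 : ℝ) *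
        ∫ y, Real.exp (-‖y‖ ^ 2 / (4 * b)) ∂κ : ℝ) := by
  have := integral_cexp_neg_mul_sq_norm_mul_integral (κ := κ) measurable_id
    (integrable_const (1 : ℂ)) (b := b) (by simpa using hb)
  simp only [one_mul, id, ← charFun_apply] at this
  rw [this, Complex.ofReal_mul, ← integral_complex_ofReal, Complex.ofReal_cpow (by positivity)]
  push_cast
  rfl

theorem integral_charFun_eq_zero {κ : Measure V} [IsFiniteMeasure κ]
    (hinteg : Integrable (charFun κ)) {δ : ℝ} (hδ : 0 < δ) (hκ : κ (Metric.ball 0 δ) = 0) :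
    ∫ ξ, charFun κ ξ = 0 := by
  set N : ℝ := Module.finrank ℝ V / 2
  have gaussian_tail {c : ℝ} (hc : 0 < c) :
      ∫ y, Real.exp (-‖y‖ ^ 2 / (4 * c⁻¹)) ∂κ ≤ Real.exp (-(δ ^ 2 / 4) * c) * κ.real univ := by
    refine (Real.le_norm_self _).trans (norm_integral_le_of_norm_le_const ?_)
    filter_upwards [measure_eq_zero_iff_ae_notMem.1 hκ] with y hy
    rw [Metric.mem_ball, dist_zero_right, not_lt] at hy
    rw [Real.norm_of_nonneg (Real.exp_pos _).le, Real.exp_le_exp,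
      show -‖y‖ ^ 2 / (4 * c⁻¹) = -(‖y‖ ^ 2 / 4) * c by field_simp]
    gcongr
  refine tendsto_nhds_unique (Real.tendsto_integral_cexp_sq_smul hinteg) <|
    squeeze_zero_norm' (a := fun c : ℝ => Real.pi ^ N * κ.real univ *
      (c ^ N * Real.exp (-(δ ^ 2 / 4) * c))) ?_ ?_
  · filter_upwards [eventually_gt_atTop 0] with c hc
    have := integral_exp_neg_mul_sq_norm_mul_charFun κ (inv_pos.2 hc)
    simp only [smul_eq_mul, this]
    rw [norm_real, Real.norm_of_nonneg (by positivity), div_inv_eq_mul,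
      Real.mul_rpow Real.pi_pos.le hc.le]
    calc _ ≤ Real.pi ^ N * c ^ N * (Real.exp (-(δ ^ 2 / 4) * c) * κ.real univ) := by
          gcongr
          exact gaussian_tail hc
      _ = _ := by ring
  · simpa using (tendsto_rpow_mul_exp_neg_mul_atTop_nhds_zero N (δ ^ 2 / 4)
      (by positivity)).const_mul (Real.pi ^ N * κ.real univ)

theorem fourier_charFun_eq_zero {κ : Measure V} [IsFiniteMeasure κ]
    (hinteg : Integrable (charFun κ)) {K : Set V} (hK : IsClosed K) (hκ : κ Kᶜ = 0) {v : V}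
    (hv : (2 * Real.pi) • v ∉ K) : FourierTransform.fourier (charFun κ) v = 0 := by
  obtain ⟨δ, hδ, hball⟩ := Metric.isOpen_iff.1 hK.isOpen_compl _ hv
  set κ' := κ.map (· + -((2 * Real.pi) • v)) with hκ'
  have charFun_translate (ξ : V) : charFun κ' ξ =
      cexp (((-2 * Real.pi * inner ℝ ξ v : ℝ) : ℂ) * I) • charFun κ ξ := by
    rw [hκ', charFun_map_add_const, smul_eq_mul, mul_comm, inner_neg_left, real_inner_smul_left,
      real_inner_comm]
    congr 3
    push_cast
    ring
  have hκ'_ball : κ' (Metric.ball 0 δ) = 0 := by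
    rw [hκ', Measure.map_apply (by fun_prop) Metric.isOpen_ball.measurableSet]
    refine measure_mono_null (fun y hy => hball ?_) hκ
    rwa [mem_preimage, mem_ball_zero_iff, ← sub_eq_add_neg, ← mem_ball_iff_norm] at hy
  rw [Real.fourier_eq']
  simp_rw [← charFun_translate]
  refine integral_charFun_eq_zero (hinteg.mono ?_ ?_) hδ hκ'_ball
  · exact stronglyMeasurable_charFun.aestronglyMeasurable
  · exact .of_forall fun ξ => by
      rw [charFun_translate, norm_smul, norm_exp_ofReal_mul_I, one_mul]

/- If the interior is empty, the Fourier transform of `charFun κ`, morally the density of `κ`,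
vanishes on a dense set and hence everywhere, so that `charFun κ 0`, the mass of `κ`, is zero. -/
theorem interior_nonempty_of_integrable_charFun {κ : Measure V} [IsFiniteMeasure κ] (hκ0 : κ ≠ 0)
    (hinteg : Integrable (charFun κ)) {K : Set V} (hK : IsClosed K) (hκ : κ Kᶜ = 0) :
    (interior K).Nonempty := by
  by_contra hempty
  rw [not_nonempty_iff_eq_empty, interior_eq_empty_iff_dense_compl] at hempty
  have two_pi_ne_zero : 2 * Real.pi ≠ 0 := Real.two_pi_pos.ne'
  have fourier_continuous : Continuous (FourierTransform.fourier (charFun κ)) :=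
    VectorFourier.fourierIntegral_continuous Real.continuous_fourierChar
      (by exact continuous_inner) hinteg
  have fourier_eq_zero : FourierTransform.fourier (charFun κ) = fun _ => 0 :=
    fourier_continuous.ext_on (hempty.preimage (Homeomorph.smulOfNeZero _ two_pi_ne_zero).isOpenMap)
      continuous_const fun v hv => fourier_charFun_eq_zero hinteg hK hκ hv
  have inversion := (continuous_charFun (μ := κ)).fourierInv_fourier_eq hinteg
    (by simp [fourier_eq_zero])
  have mass_eq_zero : (κ.real univ : ℂ) = 0 := by
    rw [← charFun_zero, ← inversion, fourier_eq_zero, Real.fourierInv_eq']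
    simp
  rw [Complex.ofReal_eq_zero, measureReal_eq_zero_iff, Measure.measure_univ_eq_zero] at mass_eq_zero
  exact hκ0 mass_eq_zero

end Gaussian

section DiffLaw

variable {V : Type*} [MeasurableSpace V] [Sub V]

/-- The law of `x - y` for `(x, y)` distributed according to `μ.prod ν`. -/
noncomputable def diffLaw (μ ν : Measure V) : Measure V := (μ.prod ν).map fun p => p.1 - p.2

instance (μ ν : Measure V) [IsFiniteMeasure μ] [IsFiniteMeasure ν] :
    IsFiniteMeasure (diffLaw μ ν) :=
  inferInstanceAs (IsFiniteMeasure ((μ.prod ν).map _))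

variable [MeasurableSub₂ V] {μ ν : Measure V} [SFinite ν]

theorem diffLaw_eq_zero {E F s : Set V} (hE : μ Eᶜ = 0) (hF : ν Fᶜ = 0) (hs : MeasurableSet s)
    (h : ∀ x ∈ E, ∀ y ∈ F, x - y ∉ s) : diffLaw μ ν s = 0 := by
  rw [diffLaw, Measure.map_apply (by fun_prop) hs]
  refine measure_mono_null (t := Eᶜ ×ˢ univ ∪ univ ×ˢ Fᶜ) (fun p hp => ?_)
    (measure_union_null (by simp [hE]) (by simp [hF]))
  by_contra hmem
  simp only [mem_union, mem_prod, mem_univ, mem_compl_iff, and_true, true_and, not_or,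
    not_not] at hmem
  exact h _ hmem.1 _ hmem.2 hp

theorem diffLaw_ne_zero (hμ : μ ≠ 0) (hν : ν ≠ 0) : diffLaw μ ν ≠ 0 := by
  rw [diffLaw, Ne, Measure.map_eq_zero_iff (by fun_prop), ← Measure.measure_univ_eq_zero,
    ← univ_prod_univ, Measure.prod_prod, mul_eq_zero, not_or]
  exact ⟨Measure.measure_univ_ne_zero.2 hμ, Measure.measure_univ_ne_zero.2 hν⟩

end DiffLaw

section Energy

variable {V : Type*} [NormedAddCommGroup V] [InnerProductSpace ℝ V] [FiniteDimensional ℝ V]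
  [MeasurableSpace V] [BorelSpace V] {μ ν : Measure V} [IsFiniteMeasure μ] [IsFiniteMeasure ν]

theorem charFun_diffLaw (t : V) :
    charFun (diffLaw μ ν) t = charFun μ t * conj (charFun ν t) := by
  rw [diffLaw, charFun_apply, integral_map (by fun_prop) (by fun_prop), ← charFun_neg,
    charFun_apply, charFun_apply, ← integral_prod_mul]
  congr 1 with p
  rw [← Complex.exp_add, inner_sub_left, inner_neg_right]
  congr 1
  push_cast
  ring

theorem integral_exp_neg_mul_sq_norm_mul_sq_norm_charFun {b : ℝ} (hb : 0 < b) :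
    ∫ ξ : V, Real.exp (-b * ‖ξ‖ ^ 2) * ‖charFun μ ξ‖ ^ 2 =
      (Real.pi / b) ^ (Module.finrank ℝ V / 2 : ℝ) *
        ∫ x, ∫ y, Real.exp (-(dist y x / (2 * √b)) ^ 2) ∂μ ∂μ := by
  have hgauss (p : V × V) : -‖p.1 - p.2‖ ^ 2 / (4 * b) = -(dist p.2 p.1 / (2 * √b)) ^ 2 := by
    rw [div_pow, mul_pow, Real.sq_sqrt hb.le, dist_comm, dist_eq_norm]
    ring
  have := integral_exp_neg_mul_sq_norm_mul_charFun (diffLaw μ μ) hb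
  rw [diffLaw, integral_map (by fun_prop) (by fun_prop), ← diffLaw] at this
  simp_rw [hgauss] at this
  rw [integral_prod _ (Integrable.of_bound (by fun_prop) 1 (.of_forall fun p => ?_))] at this
  · refine Complex.ofReal_injective (Eq.trans ?_ this)
    rw [← integral_complex_ofReal]
    congr 1 with ξ
    rw [charFun_diffLaw, Complex.mul_conj']
    push_cast
    rfl
  · rw [Real.norm_of_nonneg (Real.exp_pos _).le, Real.exp_le_one_iff]
    exact neg_nonpos.2 (sq_nonneg _)

theorem integrable_exp_neg_mul_sq_norm_mul_norm_charFun_mul {b : ℝ} (hb : 0 < b) :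
    Integrable fun ξ : V => Real.exp (-b * ‖ξ‖ ^ 2) * (‖charFun μ ξ‖ * ‖charFun ν ξ‖) := by
  have gaussian_integrable : Integrable fun ξ : V => Real.exp (-b * ‖ξ‖ ^ 2) := by
    have := (GaussianFourier.integrable_cexp_neg_mul_sq_norm_add (b := b) (by simpa) 0 (0 : V)).norm
    refine this.congr (.of_forall fun ξ => ?_)
    simp only [Complex.norm_exp]
    norm_cast
    simp
  refine gaussian_integrable.mul_bdd (c := μ.real univ * ν.real univ)
    (by fun_prop) (.of_forall fun ξ => ?_)
  rw [norm_mul, norm_norm, norm_norm]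
  gcongr <;> exact norm_charFun_le _

theorem IsFrostman.exists_integral_exp_mul_sq_norm_charFun_le {s : ℝ} (h : IsFrostman μ s) :
    ∃ A, ∀ b, 0 < b → ∫ ξ : V, Real.exp (-b * ‖ξ‖ ^ 2) * ‖charFun μ ξ‖ ^ 2 ≤
      A * b ^ ((s - Module.finrank ℝ V) / 2) := by
  obtain ⟨A, hA⟩ := h.exists_integral_exp_neg_sq_dist_le
  set N := (Module.finrank ℝ V : ℝ)
  refine ⟨Real.pi ^ (N / 2) * (A * 2 ^ s * μ.real univ), fun b hb => ?_⟩
  have double_integral_le : ∫ x, ∫ y, Real.exp (-(dist y x / (2 * √b)) ^ 2) ∂μ ∂μ ≤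
      ∫ _, A * (2 * √b) ^ s ∂μ :=
    integral_mono_of_nonneg (.of_forall fun x => integral_nonneg fun y => (Real.exp_pos _).le)
      (integrable_const _) (.of_forall fun x => hA x _ (by positivity))
  calc ∫ ξ : V, Real.exp (-b * ‖ξ‖ ^ 2) * ‖charFun μ ξ‖ ^ 2
      ≤ (Real.pi / b) ^ (N / 2) * ∫ _, A * (2 * √b) ^ s ∂μ := by
        rw [integral_exp_neg_mul_sq_norm_mul_sq_norm_charFun hb]
        gcongr
    _ = Real.pi ^ (N / 2) * (A * 2 ^ s * μ.real univ) * (b ^ (-(N / 2)) * b ^ (s / 2)) := by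
        rw [integral_const, smul_eq_mul, Real.div_rpow Real.pi_pos.le hb.le,
          Real.mul_rpow zero_le_two (Real.sqrt_nonneg b), Real.rpow_neg hb.le, Real.sqrt_eq_rpow,
          ← Real.rpow_mul hb.le, one_div_mul_eq_div]
        ring
    _ = _ := by
        rw [← Real.rpow_add hb]
        ring_nf

/- Cauchy–Schwarz between the two energies, in the form `2uv ≤ cu² + c⁻¹v²` with the weight
`c = b ^ ((s' - s) / 4)` that balances them. -/
theorem IsFrostman.exists_integral_exp_mul_norm_charFun_mul_le {s s' : ℝ} (hμ : IsFrostman μ s)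
    (hν : IsFrostman ν s') :
    ∃ A, ∀ b, 0 < b →
      ∫ ξ : V, Real.exp (-b * ‖ξ‖ ^ 2) * (‖charFun μ ξ‖ * ‖charFun ν ξ‖) ≤
        A * b ^ ((s + s') / 4 - Module.finrank ℝ V / 2) := by
  obtain ⟨A, hA⟩ := hμ.exists_integral_exp_mul_sq_norm_charFun_le
  obtain ⟨B, hB⟩ := hν.exists_integral_exp_mul_sq_norm_charFun_le
  refine ⟨(A + B) / 2, fun b hb => ?_⟩
  set N := (Module.finrank ℝ V : ℝ)
  set c := b ^ ((s' - s) / 4) with hc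
  have hc0 : 0 < c := Real.rpow_pos_of_pos hb _
  have am_gm (u v : ℝ) : u * v ≤ c / 2 * u ^ 2 + c⁻¹ / 2 * v ^ 2 := by
    have : 0 ≤ c⁻¹ * (c * u - v) ^ 2 := by positivity
    field_simp at this ⊢
    linarith
  have energy_integrable (κ : Measure V) [IsFiniteMeasure κ] :
      Integrable fun ξ : V => Real.exp (-b * ‖ξ‖ ^ 2) * ‖charFun κ ξ‖ ^ 2 := by
    simpa only [sq ‖charFun κ _‖] using
      integrable_exp_neg_mul_sq_norm_mul_norm_charFun_mul (μ := κ) (ν := κ) hb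
  calc ∫ ξ : V, Real.exp (-b * ‖ξ‖ ^ 2) * (‖charFun μ ξ‖ * ‖charFun ν ξ‖)
      ≤ ∫ ξ : V, (c / 2 * (Real.exp (-b * ‖ξ‖ ^ 2) * ‖charFun μ ξ‖ ^ 2) +
          c⁻¹ / 2 * (Real.exp (-b * ‖ξ‖ ^ 2) * ‖charFun ν ξ‖ ^ 2)) := by
        refine integral_mono (integrable_exp_neg_mul_sq_norm_mul_norm_charFun_mul hb)
          (((energy_integrable μ).const_mul _).add ((energy_integrable ν).const_mul _)) fun ξ => ?_
        calc _ ≤ Real.exp (-b * ‖ξ‖ ^ 2) *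
              (c / 2 * ‖charFun μ ξ‖ ^ 2 + c⁻¹ / 2 * ‖charFun ν ξ‖ ^ 2) := by
              gcongr
              exact am_gm _ _
          _ = _ := by ring
    _ = c / 2 * (∫ ξ : V, Real.exp (-b * ‖ξ‖ ^ 2) * ‖charFun μ ξ‖ ^ 2) +
          c⁻¹ / 2 * ∫ ξ : V, Real.exp (-b * ‖ξ‖ ^ 2) * ‖charFun ν ξ‖ ^ 2 := by
        rw [integral_add ((energy_integrable μ).const_mul _) ((energy_integrable ν).const_mul _),
          integral_const_mul, integral_const_mul]
    _ ≤ c / 2 * (A * b ^ ((s - N) / 2)) + c⁻¹ / 2 * (B * b ^ ((s' - N) / 2)) := by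
        gcongr
        exacts [hA b hb, hB b hb]
    _ = A / 2 * (c * b ^ ((s - N) / 2)) + B / 2 * (c⁻¹ * b ^ ((s' - N) / 2)) := by ring
    _ = _ := by
        rw [hc, ← Real.rpow_neg hb.le, ← Real.rpow_add hb, ← Real.rpow_add hb]
        ring_nf

theorem IsFrostman.exists_lintegral_exp_mul_norm_charFun_mul_le {s s' : ℝ} (hμ : IsFrostman μ s)
    (hν : IsFrostman ν s') :
    ∃ A, ∀ b, 0 < b →
      ∫⁻ ξ : V, ENNReal.ofReal (Real.exp (-b * ‖ξ‖ ^ 2) * (‖charFun μ ξ‖ * ‖charFun ν ξ‖)) ≤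
        ENNReal.ofReal (A * b ^ ((s + s') / 4 - Module.finrank ℝ V / 2)) := by
  obtain ⟨A, hA⟩ := hμ.exists_integral_exp_mul_norm_charFun_mul_le hν
  refine ⟨A, fun b hb => ?_⟩
  rw [← ofReal_integral_eq_lintegral_ofReal
    (integrable_exp_neg_mul_sq_norm_mul_norm_charFun_mul hb) (.of_forall fun ξ => by positivity)]
  exact ENNReal.ofReal_le_ofReal (hA b hb)

end Energy

section Paraboloid

variable {W : Type*} [NormedAddCommGroup W]

/-- The parabolic polynomial `(x, t) ↦ ‖x‖² + t`, without coordinates. -/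
def paraboloid (z : WithLp 2 (W × ℝ)) : ℝ := ‖z.fst‖ ^ 2 + z.snd

theorem continuous_paraboloid : Continuous (paraboloid (W := W)) := by
  unfold paraboloid
  fun_prop

variable [MeasurableSpace W] [BorelSpace W]

/-- The law of `paraboloid` under the measure with density `exp (-‖x‖²)` with respect to `m`. The
density keeps the Gaussian integrals that express its characteristic function through that of `m`
absolutely convergent. -/
noncomputable def paraboloidLaw (m : Measure (WithLp 2 (W × ℝ))) : Measure ℝ :=
  (m.withDensity fun z => ENNReal.ofReal (Real.exp (-‖z.fst‖ ^ 2))).map paraboloid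

instance (m : Measure (WithLp 2 (W × ℝ))) [IsFiniteMeasure m] :
    IsFiniteMeasure (paraboloidLaw m) := by
  have : IsFiniteMeasure (m.withDensity fun z => ENNReal.ofReal (Real.exp (-‖z.fst‖ ^ 2))) :=
    isFiniteMeasure_withDensity_ofReal <| HasFiniteIntegral.of_bounded (C := 1) <|
      .of_forall fun z => by
        rw [Real.norm_of_nonneg (Real.exp_pos _).le, Real.exp_le_one_iff]
        exact neg_nonpos.2 (sq_nonneg _)
  exact inferInstanceAs (IsFiniteMeasure (Measure.map _ _))

variable {m : Measure (WithLp 2 (W × ℝ))}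

theorem paraboloidLaw_eq_zero_iff {s : Set ℝ} (hs : MeasurableSet s) :
    paraboloidLaw m s = 0 ↔ m (paraboloid ⁻¹' s) = 0 := by
  rw [paraboloidLaw, Measure.map_apply continuous_paraboloid.measurable hs,
    withDensity_apply_eq_zero (by fun_prop)]
  simp [Real.exp_pos]

theorem charFun_paraboloidLaw (τ : ℝ) :
    charFun (paraboloidLaw m) τ =
      ∫ z, cexp ((τ * z.snd : ℝ) * I) * cexp (-(1 - τ * I) * ‖z.fst‖ ^ 2) ∂m := by
  rw [paraboloidLaw, charFun_apply, integral_map continuous_paraboloid.measurable.aemeasurable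
    (by fun_prop), integral_withDensity_eq_integral_toReal_smul (by fun_prop)
    (.of_forall fun _ => ENNReal.ofReal_lt_top)]
  congr 1 with z
  rw [ENNReal.toReal_ofReal (Real.exp_pos _).le, Complex.real_smul, Complex.ofReal_exp,
    ← Complex.exp_add, ← Complex.exp_add]
  congr 1
  simp only [paraboloid, Real.inner_apply]
  push_cast
  ring

end Paraboloid

section Weight

variable {W : Type*} [NormedAddCommGroup W]

/-- The weight that bounds the characteristic function of `paraboloidLaw m` by an integral of that
of `m`; see `enorm_charFun_paraboloidLaw_le`. -/
noncomputable def paraboloidWeight [NormedSpace ℝ W] (ζ : WithLp 2 (W × ℝ)) : ℝ :=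
  (1 + ζ.snd ^ 2)⁻¹ ^ (Module.finrank ℝ W / 4 : ℝ) *
    Real.exp (-((1 + ζ.snd ^ 2)⁻¹ / 4 * ‖ζ.fst‖ ^ 2))

/- Take `k` with `(1 + ζ.snd ^ 2)⁻¹` comparable to `q = 4⁻ᵏ`; then `q * ζ.snd ^ 2 ≤ 4`, so the last
coordinate may be inserted into the Gaussian. -/
theorem exists_paraboloidWeight_le [NormedSpace ℝ W] (ζ : WithLp 2 (W × ℝ)) :
    ∃ k : ℕ, paraboloidWeight ζ ≤ Real.exp (1 / 4) *
      (((1 / 4 : ℝ) ^ k) ^ (Module.finrank ℝ W / 4 : ℝ) *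
        Real.exp (-((1 / 4) ^ k / 16) * ‖ζ‖ ^ 2)) := by
  set a := (1 + ζ.snd ^ 2)⁻¹ with ha
  have ha0 : 0 < a := by positivity
  obtain ⟨k, hka, hak⟩ := exists_nat_pow_near_of_lt_one ha0
    (inv_le_one_of_one_le₀ (le_add_of_nonneg_right (sq_nonneg _)))
    (show (0 : ℝ) < 1 / 4 by norm_num) (by norm_num)
  refine ⟨k, ?_⟩
  set q := (1 / 4 : ℝ) ^ k
  have hqa : q ≤ 4 * a := by
    rw [pow_succ] at hka
    linarith
  have snd_le : q * ζ.snd ^ 2 ≤ 4 :=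
    calc q * ζ.snd ^ 2 ≤ 4 * a * (1 + ζ.snd ^ 2) := by
          gcongr
          exact le_add_of_nonneg_left zero_le_one
      _ = 4 := by rw [mul_assoc, ha, inv_mul_cancel₀ (by positivity), mul_one]
  have fst_le : q * ‖ζ.fst‖ ^ 2 ≤ 4 * a * ‖ζ.fst‖ ^ 2 := by gcongr
  rw [mul_left_comm, ← Real.exp_add, paraboloidWeight, ← ha]
  gcongr
  rw [WithLp.prod_norm_sq_eq_of_L2, Real.norm_eq_abs, sq_abs]
  linarith

theorem normSq_one_sub_mul_I (τ : ℝ) : Complex.normSq (1 - τ * I) = 1 + τ ^ 2 := by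
  simp [Complex.normSq_apply, sq]

theorem inv_four_mul_one_sub_mul_I_re (τ : ℝ) :
    ((4 * (1 - τ * I))⁻¹ : ℂ).re = (1 + τ ^ 2)⁻¹ / 4 := by
  rw [mul_inv, show (4 : ℂ)⁻¹ = ((1 / 4 : ℝ) : ℂ) by norm_num, Complex.re_ofReal_mul,
    Complex.inv_re, normSq_one_sub_mul_I, Complex.sub_re, Complex.one_re, Complex.re_ofReal_mul,
    Complex.I_re]
  ring

theorem finrank_withLp_prod_real [NormedSpace ℝ W] [FiniteDimensional ℝ W] :
    Module.finrank ℝ (WithLp 2 (W × ℝ)) = Module.finrank ℝ W + 1 := by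
  rw [(WithLp.linearEquiv 2 ℝ (W × ℝ)).finrank_eq, Module.finrank_prod, Module.finrank_self]

variable [InnerProductSpace ℝ W] [FiniteDimensional ℝ W] [MeasurableSpace W] [BorelSpace W]
  {m : Measure (WithLp 2 (W × ℝ))} [IsFiniteMeasure m]

theorem integral_cexp_mul_charFun_prod (τ : ℝ) :
    ∫ ξ : W, cexp (-(4 * (1 - τ * I))⁻¹ * ‖ξ‖ ^ 2) * charFun m (WithLp.toLp 2 (ξ, τ)) =
      (Real.pi * (4 * (1 - τ * I))) ^ (Module.finrank ℝ W / 2 : ℂ) *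
        charFun (paraboloidLaw m) τ := by
  have hphase : Integrable (fun z : WithLp 2 (W × ℝ) => cexp ((τ * z.snd : ℝ) * I)) m :=
    .of_bound (by fun_prop) 1 (.of_forall fun z => (norm_exp_ofReal_mul_I _).le)
  have gaussian_swap :=
    integral_cexp_neg_mul_sq_norm_mul_integral (φ := fun z : WithLp 2 (W × ℝ) => z.fst)
      (b := (4 * (1 - τ * I))⁻¹) (by fun_prop) hphase
      (by rw [inv_four_mul_one_sub_mul_I_re]; positivity)
  rw [charFun_paraboloidLaw, ← div_inv_eq_mul (Real.pi : ℂ)]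
  convert gaussian_swap using 5 with ξ z
  · rw [charFun_apply]
    congr 1 with z
    rw [← Complex.exp_add, WithLp.prod_inner_apply, Real.inner_apply]
    congr 1
    simp only [WithLp.ofLp_fst, WithLp.ofLp_snd]
    push_cast
    ring
  · field_simp

theorem rpow_le_norm_cpow (τ : ℝ) (n : ℕ) :
    (1 + τ ^ 2) ^ (n / 4 : ℝ) ≤ ‖(Real.pi * (4 * (1 - τ * I))) ^ (n / 2 : ℂ)‖ := by
  have norm_eq : ‖1 - τ * I‖ = (1 + τ ^ 2) ^ (1 / 2 : ℝ) := by
    rw [Complex.norm_def, normSq_one_sub_mul_I, Real.sqrt_eq_rpow]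
  have hcast : (n / 2 : ℂ) = ((n / 2 : ℝ) : ℂ) := by push_cast; rfl
  rw [hcast, Complex.norm_cpow_real, norm_mul, norm_mul, norm_eq, ← mul_assoc,
    show (n / 4 : ℝ) = 1 / 2 * (n / 2) by ring, Real.rpow_mul (by positivity)]
  gcongr
  refine le_mul_of_one_le_left (by positivity) ?_
  rw [Complex.norm_real, Real.norm_of_nonneg Real.pi_pos.le, RCLike.norm_ofNat]
  linarith [Real.pi_gt_three]

theorem enorm_charFun_paraboloidLaw_le (τ : ℝ) :
    ‖charFun (paraboloidLaw m) τ‖ₑ ≤ ∫⁻ ξ : W,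
      ENNReal.ofReal (paraboloidWeight (WithLp.toLp 2 (ξ, τ)) *
        ‖charFun m (WithLp.toLp 2 (ξ, τ))‖) := by
  set n := Module.finrank ℝ W
  set w := (Real.pi * (4 * (1 - τ * I))) ^ (n / 2 : ℂ)
  have le_norm_w : (1 + τ ^ 2) ^ (n / 4 : ℝ) ≤ ‖w‖ := rpow_le_norm_cpow τ n
  have norm_w_pos : 0 < ‖w‖ := lt_of_lt_of_le (by positivity) le_norm_w
  have norm_inv_le : ‖w⁻¹‖ ≤ (1 + τ ^ 2)⁻¹ ^ (n / 4 : ℝ) := by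
    rw [norm_inv, Real.inv_rpow (by positivity)]
    gcongr
  have integrand_le (ξ : W) :
      ‖w⁻¹ * (cexp (-(4 * (1 - τ * I))⁻¹ * ‖ξ‖ ^ 2) * charFun m (WithLp.toLp 2 (ξ, τ)))‖ ≤
        paraboloidWeight (WithLp.toLp 2 (ξ, τ)) * ‖charFun m (WithLp.toLp 2 (ξ, τ))‖ := by
    rw [norm_mul, norm_mul, ← mul_assoc, Complex.norm_exp, ← Complex.ofReal_pow,
      Complex.re_mul_ofReal, Complex.neg_re, inv_four_mul_one_sub_mul_I_re, neg_mul]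
    exact mul_le_mul_of_nonneg_right (mul_le_mul_of_nonneg_right norm_inv_le (Real.exp_pos _).le)
      (norm_nonneg _)
  rw [← inv_mul_cancel_left₀ (norm_pos_iff.1 norm_w_pos) (charFun (paraboloidLaw m) τ),
    ← integral_cexp_mul_charFun_prod, ← integral_const_mul]
  refine (enorm_integral_le_lintegral_enorm _).trans (lintegral_mono fun ξ => ?_)
  rw [← ofReal_norm]
  exact ENNReal.ofReal_le_ofReal (integrand_le ξ)

end Weight

section Interior

variable {W : Type*} [NormedAddCommGroup W] [InnerProductSpace ℝ W] [FiniteDimensional ℝ W]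
  [MeasurableSpace W] [BorelSpace W] {μ ν : Measure (WithLp 2 (W × ℝ))} [IsFiniteMeasure μ]
  [IsFiniteMeasure ν] {s s' : ℝ}

theorem summable_rpow_mul_div_rpow {q : ℝ} (hq : 0 < q) (hq1 : q < 1) {a θ c : ℝ} (hc : 0 < c)
    (h : 0 < a + θ) : Summable fun k : ℕ => (q ^ k) ^ a * (q ^ k / c) ^ θ := by
  have hgeom := summable_geometric_of_lt_one (Real.rpow_nonneg hq.le (a + θ))
    (Real.rpow_lt_one hq.le hq1 h)
  refine (hgeom.div_const (c ^ θ)).congr fun k => ?_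
  rw [Real.div_rpow (by positivity) hc.le, ← mul_div_assoc, ← Real.rpow_add (by positivity),
    Real.rpow_pow_comm hq.le]

theorem lintegral_paraboloidWeight_mul_lt_top (hμ : IsFrostman μ s) (hν : IsFrostman ν s')
    (hs : Module.finrank ℝ W + 2 < s + s') :
    ∫⁻ ζ, ENNReal.ofReal (paraboloidWeight ζ * ‖charFun (diffLaw μ ν) ζ‖) < ∞ := by
  obtain ⟨A, hA⟩ := hμ.exists_lintegral_exp_mul_norm_charFun_mul_le hν
  rw [finrank_withLp_prod_real] at hA
  set n := Module.finrank ℝ W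
  set θ := (s + s') / 4 - ((n + 1 : ℕ) : ℝ) / 2 with hθ
  set q : ℕ → ℝ := fun k => (1 / 4) ^ k
  have q_pos (k : ℕ) : 0 < q k := by positivity
  set c : ℕ → ℝ := fun k => Real.exp (1 / 4) * q k ^ (n / 4 : ℝ)
  have c_nonneg (k : ℕ) : 0 ≤ c k := by positivity
  set G : ℕ → WithLp 2 (W × ℝ) → ℝ := fun k ζ =>
    Real.exp (-(q k / 16) * ‖ζ‖ ^ 2) * (‖charFun μ ζ‖ * ‖charFun ν ζ‖)
  have integrand_le (ζ) : ENNReal.ofReal (paraboloidWeight ζ * ‖charFun (diffLaw μ ν) ζ‖) ≤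
      ∑' k, ENNReal.ofReal (c k) * ENNReal.ofReal (G k ζ) := by
    obtain ⟨k, hk⟩ := exists_paraboloidWeight_le ζ
    refine le_trans ?_ (ENNReal.le_tsum k)
    rw [charFun_diffLaw, norm_mul, RCLike.norm_conj, ← ENNReal.ofReal_mul (c_nonneg k)]
    refine ENNReal.ofReal_le_ofReal ((mul_le_mul_of_nonneg_right hk (by positivity)).trans_eq ?_)
    simp only [c, G, q]
    ring
  have summable : Summable fun k =>
      Real.exp (1 / 4) * A * (q k ^ (n / 4 : ℝ) * (q k / 16) ^ θ) := by
    refine (summable_rpow_mul_div_rpow (by norm_num) (by norm_num) (by norm_num) ?_).mul_left _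
    rw [hθ]
    push_cast
    linarith
  calc _ ≤ ∫⁻ ζ, ∑' k, ENNReal.ofReal (c k) * ENNReal.ofReal (G k ζ) := lintegral_mono integrand_le
    _ = ∑' k, ENNReal.ofReal (c k) * ∫⁻ ζ, ENNReal.ofReal (G k ζ) := by
        rw [lintegral_tsum fun k => by fun_prop]
        simp_rw [lintegral_const_mul' _ _ ENNReal.ofReal_ne_top]
    _ ≤ ∑' k, ENNReal.ofReal (c k) * ENNReal.ofReal (A * (q k / 16) ^ θ) :=
        ENNReal.tsum_le_tsum fun k => by
          gcongr
          exact hA _ (div_pos (q_pos k) (by norm_num))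
    _ = ∑' k, ENNReal.ofReal (Real.exp (1 / 4) * A * (q k ^ (n / 4 : ℝ) * (q k / 16) ^ θ)) := by
        congr 1 with k
        rw [← ENNReal.ofReal_mul (c_nonneg k)]
        congr 1
        ring
    _ < ∞ := summable.tsum_ofReal_lt_top

theorem integrable_charFun_paraboloidLaw {m : Measure (WithLp 2 (W × ℝ))} [IsFiniteMeasure m]
    (h : ∫⁻ ζ, ENNReal.ofReal (paraboloidWeight ζ * ‖charFun m ζ‖) < ∞) :
    Integrable (charFun (paraboloidLaw m)) := by
  refine ⟨stronglyMeasurable_charFun.aestronglyMeasurable, lt_of_le_of_lt ?_ h⟩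
  have measurable : Measurable fun ζ => ENNReal.ofReal (paraboloidWeight ζ * ‖charFun m ζ‖) := by
    unfold paraboloidWeight
    fun_prop
  calc ∫⁻ τ, ‖charFun (paraboloidLaw m) τ‖ₑ
      ≤ ∫⁻ τ : ℝ, ∫⁻ ξ : W, ENNReal.ofReal (paraboloidWeight (WithLp.toLp 2 (ξ, τ)) *
          ‖charFun m (WithLp.toLp 2 (ξ, τ))‖) := lintegral_mono enorm_charFun_paraboloidLaw_le
    _ = ∫⁻ p : W × ℝ, ENNReal.ofReal (paraboloidWeight (WithLp.toLp 2 p) *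
          ‖charFun m (WithLp.toLp 2 p)‖) := by
        rw [Measure.volume_eq_prod, lintegral_prod_symm]
        exact (measurable.comp (WithLp.volume_preserving_toLp W ℝ).measurable).aemeasurable
    _ = ∫⁻ ζ, ENNReal.ofReal (paraboloidWeight ζ * ‖charFun m ζ‖) :=
        (WithLp.volume_preserving_toLp W ℝ).lintegral_comp measurable

theorem exists_nnreal_lt_add_of_lt_add {a b c : ℝ≥0∞} (ha : a ≤ c) (hb : b ≤ c) (h : c < a + b) :
    ∃ s t : NNReal, 0 < s ∧ 0 < t ∧ (s : ℝ≥0∞) < a ∧ (t : ℝ≥0∞) < b ∧ (c : ℝ≥0∞) < s + t := by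
  have hc : c ≠ ∞ := h.ne_top
  obtain ⟨s, hs, hsa⟩ := ENNReal.lt_iff_exists_nnreal_btwn.1 (ENNReal.sub_lt_of_lt_add hb h)
  obtain ⟨t, ht, htb⟩ := ENNReal.lt_iff_exists_nnreal_btwn.1
    (ENNReal.sub_lt_of_lt_add (hsa.le.trans ha)
      (add_comm b s ▸ ENNReal.lt_add_of_sub_lt_right (.inl hc) hs))
  exact ⟨s, t, by exact_mod_cast pos_of_gt hs, by exact_mod_cast pos_of_gt ht, hsa, htb,
    ENNReal.lt_add_of_sub_lt_left (.inl hc) ht⟩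

theorem interior_nonempty_paraboloid_sub {E F : Set (WithLp 2 (W × ℝ))} (hE : IsCompact E)
    (hF : IsCompact F) (h : (Module.finrank ℝ W : ℝ≥0∞) + 2 < dimH E + dimH F) :
    (interior {t : ℝ | ∃ x ∈ E, ∃ y ∈ F, paraboloid (x - y) = t}).Nonempty := by
  have dimH_le (K : Set (WithLp 2 (W × ℝ))) : dimH K ≤ (Module.finrank ℝ W : ℝ≥0∞) + 2 := by
    refine (dimH_mono (subset_univ K)).trans ?_
    rw [Real.dimH_univ_eq_finrank, finrank_withLp_prod_real, Nat.cast_succ]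
    gcongr
    exact one_le_two
  obtain ⟨s, s', hs, hs', hsE, hsF, hss'⟩ :=
    exists_nnreal_lt_add_of_lt_add (dimH_le E) (dimH_le F) h
  obtain ⟨μ, _, hμ0, hμE, hμ⟩ := exists_isFrostman_of_lt_dimH hE hs hsE
  obtain ⟨ν, _, hν0, hνF, hν⟩ := exists_isFrostman_of_lt_dimH hF hs' hsF
  have hK : IsCompact {t : ℝ | ∃ x ∈ E, ∃ y ∈ F, paraboloid (x - y) = t} := by
    convert (hE.prod hF).image (continuous_paraboloid.comp continuous_sub) using 1
    ext t
    simp [and_assoc]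
  refine interior_nonempty_of_integrable_charFun (κ := paraboloidLaw (diffLaw μ ν)) ?_
    (integrable_charFun_paraboloidLaw (lintegral_paraboloidWeight_mul_lt_top hμ hν
      (by exact_mod_cast hss'))) hK.isClosed ?_
  · rw [Ne, ← Measure.measure_univ_eq_zero, paraboloidLaw_eq_zero_iff .univ, preimage_univ,
      Measure.measure_univ_eq_zero]
    exact diffLaw_ne_zero hμ0 hν0
  · rw [paraboloidLaw_eq_zero_iff hK.measurableSet.compl]
    exact diffLaw_eq_zero hμE hνF
      (hK.measurableSet.compl.preimage continuous_paraboloid.measurable)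
      fun x hx y hy hxy => hxy ⟨x, hx, y, hy, rfl⟩

end Interior

section Euclidean

/-- The splitting of `ℝⁿ⁺¹` into its first `n` coordinates and the last one. -/
noncomputable def initLastIsometry (n : ℕ) :
    EuclideanSpace ℝ (Fin (n + 1)) ≃ₗᵢ[ℝ] WithLp 2 (EuclideanSpace ℝ (Fin n) × ℝ) where
  toFun x := WithLp.toLp 2 (WithLp.toLp 2 (Fin.init x.ofLp), x (Fin.last n))
  invFun z := WithLp.toLp 2 (Fin.snoc z.fst z.snd : Fin (n + 1) → ℝ)
  map_add' x y := rfl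
  map_smul' c x := rfl
  left_inv x := by simp
  right_inv z := by
    simp only [Fin.init_snoc, Fin.snoc_last]
    rfl
  norm_map' x := by
    refine (sq_eq_sq₀ (norm_nonneg _) (norm_nonneg _)).1 ?_
    rw [WithLp.prod_norm_sq_eq_of_L2, EuclideanSpace.norm_sq_eq, EuclideanSpace.norm_sq_eq,
      Fin.sum_univ_castSucc]
    rfl

theorem parab_succ_eq_paraboloid (n : ℕ) (x : EuclideanSpace ℝ (Fin (n + 1))) :
    parab (n + 1) x = paraboloid (initLastIsometry n x) := by
  have norm_sq_fst : ‖(initLastIsometry n x).fst‖ ^ 2 = ∑ i : Fin n, x i.castSucc ^ 2 :=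
    EuclideanSpace.real_norm_sq_eq _
  rw [paraboloid, norm_sq_fst]
  simp only [parab, Fin.sum_univ_castSucc, Fin.val_castSucc, Fin.val_last, Nat.add_sub_cancel,
    Fin.is_lt, if_true, lt_irrefl, if_false]
  rfl

theorem parabolic_distance_interior_general (d : ℕ) (E F : Set (EuclideanSpace ℝ (Fin d)))
    (hE : IsCompact E) (hF : IsCompact F) (h : (d : ℝ≥0∞) + 1 < dimH E + dimH F) :
    (interior {t : ℝ | ∃ x ∈ E, ∃ y ∈ F, parab d (x - y) = t}).Nonempty := by
  obtain _ | n := d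
  · simp [dimH_subsingleton subsingleton_of_subsingleton] at h
  set e := initLastIsometry n
  have hset : {t : ℝ | ∃ x ∈ E, ∃ y ∈ F, parab (n + 1) (x - y) = t} =
      {t : ℝ | ∃ x ∈ e '' E, ∃ y ∈ e '' F, paraboloid (x - y) = t} := by
    simp only [exists_mem_image, ← map_sub, parab_succ_eq_paraboloid, e]
  rw [hset]
  refine interior_nonempty_paraboloid_sub (hE.image e.continuous) (hF.image e.continuous) ?_
  rw [e.isometry.dimH_image, e.isometry.dimH_image, finrank_euclideanSpace_fin]
  rwa [Nat.cast_succ, add_assoc, one_add_one_eq_two] at h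

end Euclidean

end

theorem parabolic_distance_interior (d : ℕ) (hd : 2 ≤ d)
    (E F : Set (EuclideanSpace ℝ (Fin d))) (hE : IsCompact E) (hF : IsCompact F)
    (hdimE : dimH E > ((d : ℝ≥0∞) + 1) / 2) (hdimF : dimH F > ((d : ℝ≥0∞) + 1) / 2) :
    (interior {t : ℝ | ∃ x ∈ E, ∃ y ∈ F, parab d (x - y) = t}).Nonempty :=
  parabolic_distance_interior_general d E F hE hF <|
    (ENNReal.add_halves _).symm.trans_lt (ENNReal.add_lt_add hdimE hdimF)
end

section
/- Let $A \subset \mathbb{R}$ be a compact set with $\dim_H(A) \ge \frac{5}{8}$ and let $d \ge 5$ be an integer. Then the distance set $\Delta(A^d)$ has non-empty interior. -/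
open ENNReal

/-- The distance set `Δ(E) = {|x - y| : x, y ∈ E}` of a set `E ⊆ ℝⁿ`. -/
def distSet {n : ℕ} (E : Set (EuclideanSpace ℝ (Fin n))) : Set ℝ :=
  {t : ℝ | ∃ x ∈ E, ∃ y ∈ E, dist x y = t}

/-- The `n`-fold Cartesian product `Aⁿ ⊆ ℝⁿ` of a set `A ⊆ ℝ`. -/
def prodSet (A : Set ℝ) (n : ℕ) : Set (EuclideanSpace ℝ (Fin n)) :=
  {x | ∀ i, x i ∈ A}

/-!
By Frostman's lemma `A` carries a measure `μ` with `μ (B(x, ρ)) ≤ C ρ ^ s` for some `s > 3 / 5`, so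
its fifth power `m` on `ℝ⁵` grows with exponent `5 s > 3`. The difference measure `ν` of `m` has the
nonnegative Fourier transform `𝓕 ν = |𝓕 m| ^ 2`, and the growth of `m` gives
`∫ 𝓕 ν (η) / (1 + |η| ^ 2) dη < ∞` because the exponent exceeds `5 - 2`.

In dimension five the Fourier transform of the uniform measure `σ_r` on the sphere of radius `r` is
elementary, and `r ^ 4 𝓕 σ_r (η) = O((1 + r ^ 4) / (1 + |η| ^ 2))`. Hence integrating `r ^ 4 𝓕 σ_r`
against `𝓕 ν` gives a continuous function of `r`. Integrated against the Gaussians `exp (-z r ^ 2)`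
it agrees, up to a constant factor, with the law of `|x|` under `ν`. For `z = 1, 2, …` these
integrals are moments in the bounded variable `exp (-r ^ 2)`, so by Weierstrass approximation the
function is proportional to the density of that law. A nonzero continuous density carried by the
closed set `Δ(A⁵)` forces this set to have interior, and `Δ(A^d)` contains `Δ(A⁵)` for
`d ≥ 5`.
-/

open MeasureTheory Module Set Filter Topology
open scoped RealInnerProductSpace NNReal

section GaussianFourier

variable {V : Type*} [NormedAddCommGroup V] [InnerProductSpace ℝ V] [FiniteDimensional ℝ V]
  [MeasurableSpace V] [BorelSpace V]

theorem integrable_exp_neg_mul_sq_norm {b : ℝ} (hb : 0 < b) :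
    Integrable fun v : V ↦ Real.exp (-b * ‖v‖ ^ 2) := by
  by_contra h
  have hint := GaussianFourier.integral_rexp_neg_mul_sq_norm (V := V) hb
  rw [integral_undef h] at hint
  exact (Real.rpow_pos_of_pos (div_pos Real.pi_pos hb) _).ne hint

theorem integral_exp_neg_mul_sq_norm_mul_cos_inner {b : ℝ} (hb : 0 < b) (x : V) :
    ∫ v : V, Real.exp (-b * ‖v‖ ^ 2) * Real.cos ⟪x, v⟫ =
      (Real.pi / b) ^ (finrank ℝ V / 2 : ℝ) * Real.exp (-‖x‖ ^ 2 / (4 * b)) := by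
  have hb' : 0 < (b : ℂ).re := hb
  have hre : ∀ v : V, Real.exp (-b * ‖v‖ ^ 2) * Real.cos ⟪x, v⟫ =
      (Complex.exp (-b * ‖v‖ ^ 2 + Complex.I * ⟪x, v⟫)).re := fun v ↦ by
    rw [Complex.exp_re]
    simp [← Complex.ofReal_pow]
  have hrpow : ((Real.pi : ℂ) / b) ^ (finrank ℝ V / 2 : ℂ) =
      ((Real.pi / b) ^ (finrank ℝ V / 2 : ℝ) : ℝ) := by
    rw [Complex.ofReal_cpow (by positivity)]
    push_cast
    rfl
  have hexp : Complex.exp (Complex.I ^ 2 * ‖x‖ ^ 2 / (4 * b)) =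
      (Real.exp (-‖x‖ ^ 2 / (4 * b)) : ℝ) := by
    push_cast
    rw [Complex.I_sq, neg_one_mul]
  calc ∫ v : V, Real.exp (-b * ‖v‖ ^ 2) * Real.cos ⟪x, v⟫
      = (∫ v : V, Complex.exp (-b * ‖v‖ ^ 2 + Complex.I * ⟪x, v⟫)).re := by
        simp_rw [hre]
        exact integral_re (GaussianFourier.integrable_cexp_neg_mul_sq_norm_add hb' _ x)
    _ = _ := by
        rw [GaussianFourier.integral_cexp_neg_mul_sq_norm_add hb', hrpow, hexp,
          ← Complex.ofReal_mul, Complex.ofReal_re]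

theorem re_charFun (μ : Measure V) [IsFiniteMeasure μ] (t : V) :
    (charFun μ t).re = ∫ x, Real.cos ⟪x, t⟫ ∂μ := by
  have hint : Integrable (fun x ↦ Complex.exp (⟪x, t⟫ * Complex.I)) μ :=
    .of_bound (by fun_prop) 1 (.of_forall fun x ↦ (Complex.norm_exp_ofReal_mul_I _).le)
  rw [charFun_apply]
  simpa [Complex.exp_ofReal_mul_I_re] using (integral_re hint).symm

theorem integral_exp_neg_mul_sq_norm_mul_re_charFun (μ : Measure V) [IsFiniteMeasure μ]
    {b : ℝ} (hb : 0 < b) :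
    ∫ t, Real.exp (-b * ‖t‖ ^ 2) * (charFun μ t).re =
      (Real.pi / b) ^ (finrank ℝ V / 2 : ℝ) * ∫ x, Real.exp (-‖x‖ ^ 2 / (4 * b)) ∂μ := by
  have hint : Integrable (Function.uncurry fun (t x : V) ↦
      Real.exp (-b * ‖t‖ ^ 2) * Real.cos ⟪x, t⟫) (volume.prod μ) := by
    refine ((integrable_exp_neg_mul_sq_norm hb).mul_prod (integrable_const (1 : ℝ))).mono
      (by fun_prop) (.of_forall fun p ↦ ?_)
    simp only [Function.uncurry_def, norm_mul, norm_one]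
    gcongr
    exact Real.abs_cos_le_one _
  calc ∫ t, Real.exp (-b * ‖t‖ ^ 2) * (charFun μ t).re
      = ∫ t, ∫ x, Real.exp (-b * ‖t‖ ^ 2) * Real.cos ⟪x, t⟫ ∂μ := by
        simp_rw [re_charFun, integral_const_mul]
    _ = ∫ x, ∫ t, Real.exp (-b * ‖t‖ ^ 2) * Real.cos ⟪x, t⟫ ∂volume ∂μ :=
        integral_integral_swap hint
    _ = _ := by
        simp_rw [integral_exp_neg_mul_sq_norm_mul_cos_inner hb, integral_const_mul]

theorem continuous_re_charFun (μ : Measure V) [IsFiniteMeasure μ] :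
    Continuous fun t ↦ (charFun μ t).re :=
  Complex.continuous_re.comp continuous_charFun

end GaussianFourier

section SphereKernel

theorem integrable_exp_neg_mul_sq_mul {z : ℝ} (hz : 0 < z) {f : ℝ → ℝ}
    (hf : AEStronglyMeasurable f) {C : ℝ} {n : ℕ} (hbound : ∀ r, |f r| ≤ C * (1 + |r| ^ n)) :
    Integrable fun r ↦ Real.exp (-z * r ^ 2) * f r := by
  have hpow : Integrable fun r : ℝ ↦ r ^ n * Real.exp (-z * r ^ 2) := by
    simpa only [Real.rpow_natCast] using
      integrable_rpow_mul_exp_neg_mul_sq hz (by linarith [n.cast_nonneg (α := ℝ)] : (-1 : ℝ) < n)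
  refine (((integrable_exp_neg_mul_sq hz).add hpow.norm).const_mul C).mono' (by fun_prop)
    (.of_forall fun r ↦ ?_)
  simp only [norm_mul, Real.norm_eq_abs, Real.abs_exp, Pi.add_apply, abs_pow]
  calc Real.exp (-z * r ^ 2) * |f r| ≤ Real.exp (-z * r ^ 2) * (C * (1 + |r| ^ n)) := by
        gcongr
        exact hbound r
    _ = _ := by ring

theorem integral_exp_neg_mul_sq_mul_id_mul {z : ℝ} (hz : 0 < z) {f f' : ℝ → ℝ}
    (hderiv : ∀ r, HasDerivAt f (f' r) r)
    (hf : Integrable fun r ↦ Real.exp (-z * r ^ 2) * f r)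
    (hf' : Integrable fun r ↦ Real.exp (-z * r ^ 2) * f' r)
    (hrf : Integrable fun r ↦ Real.exp (-z * r ^ 2) * (r * f r)) :
    ∫ r, Real.exp (-z * r ^ 2) * (r * f r) =
      (2 * z)⁻¹ * ∫ r, Real.exp (-z * r ^ 2) * f' r := by
  have hexp (r : ℝ) : HasDerivAt (fun r ↦ Real.exp (-z * r ^ 2))
      (Real.exp (-z * r ^ 2) * (-z * (2 * r))) r := by
    simpa using ((hasDerivAt_pow 2 r).const_mul (-z)).exp
  have hparts := integral_mul_deriv_eq_deriv_mul_of_integrable (fun r _ ↦ hexp r)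
    (fun r _ ↦ hderiv r) hf'
    ((hrf.const_mul (-(2 * z))).congr (.of_forall fun r ↦ by simp only [Pi.mul_apply]; ring)) hf
  have hmove : ∫ r, Real.exp (-z * r ^ 2) * (-z * (2 * r)) * f r =
      -(2 * z) * ∫ r, Real.exp (-z * r ^ 2) * (r * f r) := by
    rw [← integral_const_mul]
    congr with r
    ring
  rw [hparts, hmove]
  field_simp

theorem integral_exp_neg_mul_sq_mul_cos {z : ℝ} (hz : 0 < z) (b : ℝ) :
    ∫ r, Real.exp (-z * r ^ 2) * Real.cos (b * r) =
      (Real.pi / z) ^ (1 / 2 : ℝ) * Real.exp (-b ^ 2 / (4 * z)) := by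
  simpa [mul_comm] using integral_exp_neg_mul_sq_norm_mul_cos_inner hz b

theorem abs_sin_sub_mul_cos_le_cube (x : ℝ) : |Real.sin x - x * Real.cos x| ≤ 2 * |x| ^ 3 := by
  wlog hx : 0 ≤ x with H
  · have hneg := H (-x) (by linarith)
    rw [Real.sin_neg, Real.cos_neg, abs_neg, neg_mul, sub_neg_eq_add, neg_add_eq_sub,
      abs_sub_comm] at hneg
    exact hneg
  rw [abs_of_nonneg hx, abs_le]
  rcases hx.eq_or_lt with rfl | hx
  · simp
  have hcube : 0 < x ^ 3 := by positivity
  constructor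
  · rcases le_or_gt x 1 with h | h
    · nlinarith [Real.sin_gt_sub_cube hx, Real.cos_le_one x, h]
    · have : x ≤ x ^ 3 := le_self_pow₀ h.le (by norm_num)
      nlinarith [Real.neg_one_le_sin x, Real.cos_le_one x]
  · nlinarith [Real.sin_le hx.le, Real.one_sub_sq_div_two_le_cos (x := x)]

theorem abs_sin_sub_mul_cos_le (x : ℝ) : |Real.sin x - x * Real.cos x| ≤ 2 * |x| := by
  calc |Real.sin x - x * Real.cos x| ≤ |Real.sin x| + |x| * |Real.cos x| := by
        simpa only [abs_mul] using abs_sub (Real.sin x) (x * Real.cos x)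
    _ ≤ |x| + |x| * 1 := by
        gcongr ?_ + _ * ?_
        · exact Real.abs_sin_le_abs
        · exact Real.abs_cos_le_one x
    _ = 2 * |x| := by ring

theorem hasDerivAt_sin_sub_mul_cos (b r : ℝ) :
    HasDerivAt (fun r ↦ Real.sin (b * r) - b * r * Real.cos (b * r))
      (b ^ 2 * (r * Real.sin (b * r))) r := by
  have hlin : HasDerivAt (fun r ↦ b * r) b r := by simpa using (hasDerivAt_id r).const_mul b
  exact (hlin.sin.sub (hlin.mul hlin.cos)).congr_deriv (by ring)

/-- The radial kernel of dimension five: up to a constant factor, `sphereKernel b r` is `r ^ 4`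
times the Fourier transform of the uniform probability on the sphere of radius `r` in `ℝ⁵`, at a
frequency of norm `b`. At `b = 0` it takes the junk value `0`, which no integral over frequencies
sees. -/
noncomputable def sphereKernel (b r : ℝ) : ℝ :=
  r * (Real.sin (b * r) - b * r * Real.cos (b * r)) / b ^ 3

theorem measurable_sphereKernel : Measurable fun p : ℝ × ℝ ↦ sphereKernel p.1 p.2 := by
  unfold sphereKernel
  fun_prop

theorem continuous_sphereKernel (b : ℝ) : Continuous (sphereKernel b) := by
  unfold sphereKernel
  fun_prop

theorem sphereKernel_neg (b r : ℝ) : sphereKernel b (-r) = sphereKernel b r := by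
  simp only [sphereKernel, mul_neg, Real.sin_neg, Real.cos_neg]
  ring

theorem abs_sphereKernel_le (b r : ℝ) :
    |sphereKernel b r| ≤ 4 * (1 + |r| ^ 4) / (1 + b ^ 2) := by
  rcases eq_or_ne b 0 with rfl | hb
  · simpa [sphereKernel] using by positivity
  have : 0 < |b| := abs_pos.2 hb
  rw [le_div_iff₀ (by positivity), sphereKernel, abs_div, abs_mul, abs_pow, div_mul_eq_mul_div,
    div_le_iff₀ (by positivity)]
  have hcube := abs_sin_sub_mul_cos_le_cube (b * r)
  have hlin := abs_sin_sub_mul_cos_le (b * r)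
  rw [abs_mul] at hcube hlin
  set X := |Real.sin (b * r) - b * r * Real.cos (b * r)|
  calc |r| * X * (1 + b ^ 2) = |r| * X + |r| * |b| ^ 2 * X := by rw [sq_abs]; ring
    _ ≤ |r| * (2 * (|b| * |r|) ^ 3) + |r| * |b| ^ 2 * (2 * (|b| * |r|)) := by gcongr
    _ = (2 * (|r| ^ 2) ^ 2 + 2 * |r| ^ 2) * |b| ^ 3 := by ring
    _ ≤ 4 * (1 + (|r| ^ 2) ^ 2) * |b| ^ 3 := by
        gcongr
        nlinarith [sq_nonneg (|r| ^ 2 - 1)]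
    _ = _ := by ring

-- Two integrations by parts turn the kernel into `cos (b * r)`.
theorem integral_exp_neg_mul_sq_mul_sphereKernel {z : ℝ} (hz : 0 < z) {b : ℝ} (hb : b ≠ 0) :
    ∫ r, Real.exp (-z * r ^ 2) * sphereKernel b r =
      (Real.pi / z) ^ (1 / 2 : ℝ) / (4 * z ^ 2) * Real.exp (-b ^ 2 / (4 * z)) := by
  have hsin : Integrable fun r ↦ Real.exp (-z * r ^ 2) * Real.sin (b * r) :=
    integrable_exp_neg_mul_sq_mul hz (by fun_prop) (C := 1) (n := 0) fun r ↦ by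
      linarith [Real.abs_sin_le_one (b * r), pow_zero |r|]
  have hcos : Integrable fun r ↦ Real.exp (-z * r ^ 2) * (b * Real.cos (b * r)) :=
    integrable_exp_neg_mul_sq_mul hz (by fun_prop) (C := |b|) (n := 0) fun r ↦ by
      rw [abs_mul]
      nlinarith [Real.abs_cos_le_one (b * r), pow_zero |r|, abs_nonneg b]
  have hrsin : Integrable fun r ↦ Real.exp (-z * r ^ 2) * (r * Real.sin (b * r)) :=
    integrable_exp_neg_mul_sq_mul hz (by fun_prop) (C := 1) (n := 1) fun r ↦ by
      rw [abs_mul]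
      nlinarith [Real.abs_sin_le_one (b * r), pow_one |r|, abs_nonneg r]
  have hdiff : Integrable fun r ↦
      Real.exp (-z * r ^ 2) * (Real.sin (b * r) - b * r * Real.cos (b * r)) :=
    integrable_exp_neg_mul_sq_mul hz (by fun_prop) (C := 2 * |b|) (n := 1) fun r ↦ by
      have := abs_sin_sub_mul_cos_le (b * r)
      rw [abs_mul] at this
      linarith [pow_one |r|, abs_nonneg b]
  have hker : Integrable fun r ↦ Real.exp (-z * r ^ 2) * sphereKernel b r :=
    integrable_exp_neg_mul_sq_mul hz (continuous_sphereKernel b).aestronglyMeasurable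
      (C := 4 / (1 + b ^ 2)) (n := 4) fun r ↦ (abs_sphereKernel_le b r).trans_eq (by ring)
  have hker_eq (r : ℝ) : Real.exp (-z * r ^ 2) * (r * (Real.sin (b * r) - b * r * Real.cos (b * r)))
      = b ^ 3 * (Real.exp (-z * r ^ 2) * sphereKernel b r) := by
    simp only [sphereKernel]
    field_simp
  have hfirst := integral_exp_neg_mul_sq_mul_id_mul hz (hasDerivAt_sin_sub_mul_cos b) hdiff
    ((hrsin.const_mul (b ^ 2)).congr (.of_forall fun r ↦ by ring))
    ((hker.const_mul (b ^ 3)).congr (.of_forall fun r ↦ (hker_eq r).symm))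
  have hsecond := integral_exp_neg_mul_sq_mul_id_mul hz (f := fun r ↦ Real.sin (b * r))
    (fun r ↦ by simpa [mul_comm] using ((hasDerivAt_id r).const_mul b).sin) hsin hcos hrsin
  simp_rw [hker_eq, mul_left_comm _ (b ^ 2), integral_const_mul, hsecond, mul_left_comm _ b,
    integral_const_mul, integral_exp_neg_mul_sq_mul_cos hz] at hfirst
  refine mul_left_cancel₀ (pow_ne_zero 3 hb) (hfirst.trans ?_)
  field_simp
  norm_num

end SphereKernel

section RadialDensity

variable {V : Type*} [NormedAddCommGroup V] [InnerProductSpace ℝ V] [MeasurableSpace V]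

theorem abs_re_charFun_mul_sphereKernel_le (μ : Measure V) (η : V) (r : ℝ) :
    |(charFun μ η).re * sphereKernel ‖η‖ r| ≤
      4 * (1 + |r| ^ 4) * |(charFun μ η).re / (1 + ‖η‖ ^ 2)| := by
  have hpos : 0 < 1 + ‖η‖ ^ 2 := by positivity
  calc |(charFun μ η).re * sphereKernel ‖η‖ r|
      ≤ |(charFun μ η).re| * (4 * (1 + |r| ^ 4) / (1 + ‖η‖ ^ 2)) := by
        rw [abs_mul]
        gcongr
        exact abs_sphereKernel_le _ _
    _ = _ := by
        rw [abs_div, abs_of_pos hpos]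
        ring

variable [FiniteDimensional ℝ V] [BorelSpace V]

/-- The radial density of a measure `μ` on a five-dimensional space: when the Fourier transform of
`μ` is small enough for the integral to converge, `radialDensity μ` is, on the positive half-line
and up to a constant factor, the density of the image of `μ` under the norm. -/
noncomputable def radialDensity (μ : Measure V) (r : ℝ) : ℝ :=
  ∫ η, (charFun μ η).re * sphereKernel ‖η‖ r

theorem radialDensity_abs (μ : Measure V) (r : ℝ) : radialDensity μ |r| = radialDensity μ r := by
  rcases abs_choice r with h | h <;> simp only [h, radialDensity, sphereKernel_neg]

variable {μ : Measure V}

theorem abs_radialDensity_le (hμ : Integrable fun η ↦ (charFun μ η).re / (1 + ‖η‖ ^ 2)) (r : ℝ) :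
    |radialDensity μ r| ≤ 4 * (∫ η, |(charFun μ η).re / (1 + ‖η‖ ^ 2)|) * (1 + |r| ^ 4) := by
  calc |radialDensity μ r| ≤ ∫ η, 4 * (1 + |r| ^ 4) * |(charFun μ η).re / (1 + ‖η‖ ^ 2)| :=
        norm_integral_le_of_norm_le (f := fun η ↦ (charFun μ η).re * sphereKernel ‖η‖ r)
          (hμ.abs.const_mul _)
          (.of_forall fun η ↦ abs_re_charFun_mul_sphereKernel_le μ η r)
    _ = _ := by
        rw [integral_const_mul]
        ring

variable [IsFiniteMeasure μ]

theorem continuous_radialDensity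
    (hμ : Integrable fun η ↦ (charFun μ η).re / (1 + ‖η‖ ^ 2)) :
    Continuous (radialDensity μ) := by
  refine continuous_iff_continuousAt.2 fun r₀ ↦ continuousAt_of_dominated
    (bound := fun η ↦ 4 * (1 + (|r₀| + 1) ^ 4) * |(charFun μ η).re / (1 + ‖η‖ ^ 2)|)
    (.of_forall fun r ↦ ?_) ?_ (hμ.norm.const_mul _) (.of_forall fun η ↦ ?_)
  · exact (measurable_charFun.re.mul
      (measurable_sphereKernel.comp (measurable_norm.prodMk measurable_const))).aestronglyMeasurable
  · filter_upwards [continuous_abs.continuousAt.eventually_lt continuousAt_const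
      (lt_add_one |r₀|)] with r hr
    refine .of_forall fun η ↦ (abs_re_charFun_mul_sphereKernel_le μ η r).trans ?_
    gcongr
  · exact (continuous_const.mul (continuous_sphereKernel _)).continuousAt

theorem integrable_exp_neg_mul_sq_mul_radialDensity
    (hμ : Integrable fun η ↦ (charFun μ η).re / (1 + ‖η‖ ^ 2)) {z : ℝ} (hz : 0 < z) :
    Integrable fun r ↦ Real.exp (-z * r ^ 2) * radialDensity μ r :=
  integrable_exp_neg_mul_sq_mul hz (continuous_radialDensity hμ).aestronglyMeasurable
    (abs_radialDensity_le hμ)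

theorem integrable_exp_neg_mul_sq_mul_re_charFun_mul_sphereKernel
    (hμ : Integrable fun η ↦ (charFun μ η).re / (1 + ‖η‖ ^ 2)) {z : ℝ} (hz : 0 < z) :
    Integrable (Function.uncurry fun (r : ℝ) (η : V) ↦
      Real.exp (-z * r ^ 2) * ((charFun μ η).re * sphereKernel ‖η‖ r)) := by
  have hpoly : Integrable fun r : ℝ ↦ Real.exp (-z * r ^ 2) * (4 * (1 + |r| ^ 4)) :=
    integrable_exp_neg_mul_sq_mul hz (by fun_prop) (fun r ↦ (abs_of_nonneg (by positivity)).le)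
  refine (hpoly.mul_prod hμ.norm).mono' ?_ (.of_forall fun ⟨r, η⟩ ↦ ?_)
  · have hker : Measurable fun p : ℝ × V ↦ sphereKernel ‖p.2‖ p.1 :=
      measurable_sphereKernel.comp (measurable_snd.norm.prodMk measurable_fst)
    have : Measurable fun p : ℝ × V ↦ (charFun μ p.2).re :=
      measurable_charFun.re.comp measurable_snd
    simp only [Function.uncurry_def]
    fun_prop
  · simp only [Function.uncurry_apply_pair, norm_mul, Real.norm_eq_abs, Real.abs_exp, ← abs_mul]
    rw [mul_assoc]
    gcongr
    exact abs_re_charFun_mul_sphereKernel_le μ η r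

theorem rpow_half_div_mul_rpow_five_halves {z : ℝ} (hz : 0 < z) :
    (Real.pi / z) ^ (1 / 2 : ℝ) / (4 * z ^ 2) * (Real.pi / (1 / (4 * z))) ^ (5 / 2 : ℝ) =
      8 * Real.pi ^ 3 := by
  have hsplit : (5 / 2 : ℝ) = 2 + 1 / 2 := by norm_num
  have hprod : Real.pi / z * (4 * z * Real.pi) = (2 * Real.pi) ^ 2 := by
    field_simp
    norm_num
  have hsqrt : (Real.pi / z) ^ (1 / 2 : ℝ) * (4 * z * Real.pi) ^ (1 / 2 : ℝ) = 2 * Real.pi := by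
    rw [← Real.mul_rpow (by positivity) (by positivity), hprod, ← Real.sqrt_eq_rpow,
      Real.sqrt_sq (by positivity)]
  rw [div_div_eq_mul_div, div_one, mul_comm Real.pi, hsplit, Real.rpow_add (by positivity),
    Real.rpow_two, mul_comm (_ ^ 2), div_mul_eq_mul_div, ← mul_assoc, hsqrt]
  field_simp
  norm_num

theorem integral_exp_neg_mul_sq_mul_radialDensity (hdim : finrank ℝ V = 5)
    (hμ : Integrable fun η ↦ (charFun μ η).re / (1 + ‖η‖ ^ 2)) {z : ℝ} (hz : 0 < z) :
    ∫ r, Real.exp (-z * r ^ 2) * radialDensity μ r =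
      8 * Real.pi ^ 3 * ∫ x, Real.exp (-z * ‖x‖ ^ 2) ∂μ := by
  have : Nontrivial V := nontrivial_of_finrank_pos (R := ℝ) (by omega)
  have hinner : ∀ᵐ η : V, ∫ r, Real.exp (-z * r ^ 2) * ((charFun μ η).re * sphereKernel ‖η‖ r) =
      (Real.pi / z) ^ (1 / 2 : ℝ) / (4 * z ^ 2) *
        (Real.exp (-(1 / (4 * z)) * ‖η‖ ^ 2) * (charFun μ η).re) := by
    filter_upwards [compl_mem_ae_iff.2 (measure_singleton (0 : V))] with η hη
    simp_rw [mul_left_comm _ (charFun μ η).re]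
    rw [integral_const_mul, integral_exp_neg_mul_sq_mul_sphereKernel hz (norm_ne_zero_iff.2 hη)]
    ring_nf
  calc ∫ r, Real.exp (-z * r ^ 2) * radialDensity μ r
      = ∫ r, ∫ η, Real.exp (-z * r ^ 2) * ((charFun μ η).re * sphereKernel ‖η‖ r) := by
        simp_rw [radialDensity, integral_const_mul]
    _ = ∫ η, ∫ r, Real.exp (-z * r ^ 2) * ((charFun μ η).re * sphereKernel ‖η‖ r) :=
        integral_integral_swap (integrable_exp_neg_mul_sq_mul_re_charFun_mul_sphereKernel hμ hz)
    _ = 8 * Real.pi ^ 3 * ∫ x, Real.exp (-‖x‖ ^ 2 / (4 * (1 / (4 * z)))) ∂μ := by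
        rw [integral_congr_ae hinner, integral_const_mul,
          integral_exp_neg_mul_sq_norm_mul_re_charFun μ (by positivity), hdim, ← mul_assoc,
          Nat.cast_ofNat, rpow_half_div_mul_rpow_five_halves hz]
    _ = _ := by
        congr! 4 with x
        field_simp

end RadialDensity

section MomentProblem

variable {X Y : Type*} [MeasurableSpace X] [MeasurableSpace Y] {m : Measure X} {n : Measure Y}
  {a b : ℝ}

theorem integrable_comp_mul_of_mem_Icc {f g : X → ℝ} (hf : AEStronglyMeasurable f m)
    (hfab : ∀ x, f x ∈ Icc a b) (hg : Integrable g m) {φ : ℝ → ℝ} (hφ : Continuous φ) :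
    Integrable (fun x ↦ φ (f x) * g x) m := by
  obtain ⟨B, hB⟩ := isCompact_Icc.exists_bound_of_continuousOn hφ.continuousOn
  exact hg.bdd_mul (hφ.comp_aestronglyMeasurable hf) (.of_forall fun x ↦ hB _ (hfab x))

theorem tendsto_integral_comp_mul_of_tendstoUniformlyOn {f g : X → ℝ}
    (hf : AEStronglyMeasurable f m) (hfab : ∀ x, f x ∈ Icc a b) (hg : Integrable g m)
    {p : ℕ → ℝ → ℝ} (hp : ∀ k, Continuous (p k)) {φ : ℝ → ℝ} (hφ : Continuous φ)
    (hlim : TendstoUniformlyOn p φ atTop (Icc a b)) :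
    Tendsto (fun k ↦ ∫ x, p k (f x) * g x ∂m) atTop (𝓝 (∫ x, φ (f x) * g x ∂m)) := by
  obtain ⟨B, hB⟩ := isCompact_Icc.exists_bound_of_continuousOn (hφ.continuousOn (s := Icc a b))
  refine tendsto_integral_filter_of_dominated_convergence (fun x ↦ (B + 1) * |g x|)
    (.of_forall fun k ↦ (integrable_comp_mul_of_mem_Icc hf hfab hg (hp k)).aestronglyMeasurable)
    ?_ (hg.abs.const_mul _) (.of_forall fun x ↦ (hlim.tendsto_at (hfab x)).mul_const _)
  filter_upwards [Metric.tendstoUniformlyOn_iff.1 hlim 1 one_pos] with k hk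
  refine .of_forall fun x ↦ ?_
  rw [norm_mul]
  refine mul_le_mul_of_nonneg_right ?_ (norm_nonneg _)
  linarith [hB _ (hfab x), hk _ (hfab x), dist_eq_norm' (φ (f x)) (p k (f x)),
    norm_sub_norm_le (p k (f x)) (φ (f x))]

theorem exists_polynomial_tendstoUniformlyOn {φ : ℝ → ℝ} (hφ : ContinuousOn φ (Icc a b)) :
    ∃ p : ℕ → Polynomial ℝ, TendstoUniformlyOn (fun k x ↦ (p k).eval x) φ atTop (Icc a b) := by
  choose p hp using fun k : ℕ ↦
    exists_polynomial_near_of_continuousOn a b φ hφ (1 / (k + 1)) (by positivity)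
  refine ⟨p, Metric.tendstoUniformlyOn_iff.2 fun ε hε ↦ ?_⟩
  filter_upwards [(tendsto_order.1 tendsto_one_div_add_atTop_nhds_zero_nat).2 ε hε] with k hk x hx
  rw [dist_comm]
  exact (hp k x hx).trans hk

theorem integral_polynomial_eval_mul_eq_sum {f g : X → ℝ} (hf : AEStronglyMeasurable f m)
    (hfab : ∀ x, f x ∈ Icc a b) (hg : Integrable g m) (p : Polynomial ℝ) :
    ∫ x, p.eval (f x) * g x ∂m = p.sum fun k c ↦ c * ∫ x, f x ^ k * g x ∂m := by
  simp only [Polynomial.eval_eq_sum, Polynomial.sum, Finset.sum_mul, mul_assoc]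
  rw [integral_finsetSum _ fun k _ ↦
    (integrable_comp_mul_of_mem_Icc hf hfab hg (continuous_pow k)).const_mul _]
  simp_rw [integral_const_mul]

theorem integral_comp_mul_eq_of_moments_eq {f g : X → ℝ} {f' g' : Y → ℝ}
    (hf : AEStronglyMeasurable f m) (hf' : AEStronglyMeasurable f' n)
    (hfab : ∀ x, f x ∈ Icc a b) (hfab' : ∀ y, f' y ∈ Icc a b)
    (hg : Integrable g m) (hg' : Integrable g' n)
    (hmoments : ∀ k : ℕ, ∫ x, f x ^ k * g x ∂m = ∫ y, f' y ^ k * g' y ∂n)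
    {φ : ℝ → ℝ} (hφ : Continuous φ) :
    ∫ x, φ (f x) * g x ∂m = ∫ y, φ (f' y) * g' y ∂n := by
  obtain ⟨p, hp⟩ := exists_polynomial_tendstoUniformlyOn (hφ.continuousOn (s := Icc a b))
  refine tendsto_nhds_unique (tendsto_integral_comp_mul_of_tendstoUniformlyOn hf hfab hg
    (fun k ↦ (p k).continuous) hφ hp) ?_
  simp_rw [integral_polynomial_eval_mul_eq_sum hf hfab hg, hmoments,
    ← integral_polynomial_eval_mul_eq_sum hf' hfab' hg']
  exact tendsto_integral_comp_mul_of_tendstoUniformlyOn hf' hfab' hg'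
    (fun k ↦ (p k).continuous) hφ hp

end MomentProblem

theorem exists_continuous_comp_exp_neg_sq_ne_zero_iff {u v : ℝ} (hu : 0 ≤ u) (huv : u < v) :
    ∃ φ : ℝ → ℝ, Continuous φ ∧ (∀ x, 0 ≤ φ x) ∧
      ∀ t, φ (Real.exp (-t ^ 2)) ≠ 0 ↔ |t| ∈ Ioo u v := by
  set a := Real.exp (-v ^ 2)
  set b := Real.exp (-u ^ 2)
  have hab : a < b := Real.exp_lt_exp.2 (neg_lt_neg (by gcongr))
  refine ⟨fun x ↦ max 0 ((x - a) * (b - x)), by fun_prop, fun x ↦ le_max_left _ _, fun t ↦ ?_⟩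
  have hleft : a < Real.exp (-t ^ 2) ↔ |t| < v := by
    rw [Real.exp_lt_exp, neg_lt_neg_iff, sq_lt_sq, abs_of_pos (hu.trans_lt huv)]
  have hright : Real.exp (-t ^ 2) < b ↔ u < |t| := by
    rw [Real.exp_lt_exp, neg_lt_neg_iff, sq_lt_sq, abs_of_nonneg hu]
  rw [mem_Ioo, ← hleft, ← hright, ne_eq, max_eq_left_iff, not_le, _root_.mul_pos_iff]
  constructor
  · rintro (h | h)
    · exact ⟨by linarith, by linarith⟩
    · linarith
  · exact fun h ↦ .inl ⟨by linarith, by linarith⟩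

section RadialSupport

variable {V : Type*} [NormedAddCommGroup V] [InnerProductSpace ℝ V] [FiniteDimensional ℝ V]
  [MeasurableSpace V] [BorelSpace V] {μ : Measure V} [IsFiniteMeasure μ]

theorem integrable_exp_neg_sq_mul_radialDensity
    (hμ : Integrable fun η ↦ (charFun μ η).re / (1 + ‖η‖ ^ 2)) :
    Integrable fun r ↦ Real.exp (-r ^ 2) * radialDensity μ r := by
  simpa using integrable_exp_neg_mul_sq_mul_radialDensity hμ one_pos

theorem exp_neg_sq_mem_Icc (t : ℝ) : Real.exp (-t ^ 2) ∈ Icc (0 : ℝ) 1 :=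
  ⟨(Real.exp_pos _).le, Real.exp_le_one_iff.2 (neg_nonpos.2 (sq_nonneg t))⟩

theorem integral_comp_exp_neg_sq_mul_radialDensity (hdim : finrank ℝ V = 5)
    (hμ : Integrable fun η ↦ (charFun μ η).re / (1 + ‖η‖ ^ 2)) {φ : ℝ → ℝ} (hφ : Continuous φ) :
    ∫ r, φ (Real.exp (-r ^ 2)) * (Real.exp (-r ^ 2) * radialDensity μ r) =
      ∫ x, φ (Real.exp (-‖x‖ ^ 2)) * (8 * Real.pi ^ 3 * Real.exp (-‖x‖ ^ 2)) ∂μ := by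
  have hpow (k : ℕ) (t : ℝ) :
      Real.exp (-t ^ 2) ^ k * Real.exp (-t ^ 2) = Real.exp (-(k + 1 : ℝ) * t ^ 2) := by
    rw [← pow_succ, ← Real.exp_nat_mul]
    push_cast
    ring_nf
  refine integral_comp_mul_eq_of_moments_eq (by fun_prop) (by fun_prop) exp_neg_sq_mem_Icc
    (fun x ↦ exp_neg_sq_mem_Icc ‖x‖) (integrable_exp_neg_sq_mul_radialDensity hμ)
    (.const_mul (.of_mem_Icc 0 1 (by fun_prop) (.of_forall fun x ↦ exp_neg_sq_mem_Icc ‖x‖)) _)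
    (fun k ↦ ?_) hφ
  simp_rw [mul_left_comm _ (8 * Real.pi ^ 3), ← mul_assoc _ _ (radialDensity μ _), hpow,
    integral_const_mul]
  exact integral_exp_neg_mul_sq_mul_radialDensity hdim hμ (by positivity)

theorem not_ae_norm_notMem_Ioo_of_radialDensity_pos (hdim : finrank ℝ V = 5)
    (hμ : Integrable fun η ↦ (charFun μ η).re / (1 + ‖η‖ ^ 2)) {u v c : ℝ} (hu : 0 ≤ u)
    (huv : u < v) (hpos : ∀ t ∈ Ioo u v, 0 < c * radialDensity μ t) :
    ¬ ∀ᵐ x ∂μ, ‖x‖ ∉ Ioo u v := by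
  intro hnotMem
  have hcont := continuous_radialDensity hμ
  obtain ⟨φ, hφ, hφ_nonneg, hφ_ne⟩ := exists_continuous_comp_exp_neg_sq_ne_zero_iff hu huv
  have hzero : ∫ x, φ (Real.exp (-‖x‖ ^ 2)) * (8 * Real.pi ^ 3 * Real.exp (-‖x‖ ^ 2)) ∂μ = 0 := by
    refine integral_eq_zero_of_ae ?_
    filter_upwards [hnotMem] with x hx
    have hφx : φ (Real.exp (-‖x‖ ^ 2)) = 0 := by
      by_contra h
      exact hx (abs_norm x ▸ (hφ_ne ‖x‖).1 h)
    simp [hφx]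
  have hpos' (t : ℝ) (ht : φ (Real.exp (-t ^ 2)) ≠ 0) : 0 < c * radialDensity μ t :=
    radialDensity_abs μ t ▸ hpos _ ((hφ_ne t).1 ht)
  obtain ⟨r, hur, hrv⟩ := exists_between huv
  have hφr : φ (Real.exp (-r ^ 2)) ≠ 0 :=
    (hφ_ne r).2 (by rw [abs_of_pos (hu.trans_lt hur)]; exact ⟨hur, hrv⟩)
  have hint : 0 < ∫ t, φ (Real.exp (-t ^ 2)) * (Real.exp (-t ^ 2) * (c * radialDensity μ t)) := by
    refine integral_pos_of_integrable_nonneg_nonzero (x := r) (by fun_prop) ?_ (fun t ↦ ?_)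
      (mul_ne_zero hφr (mul_ne_zero (Real.exp_ne_zero _) (hpos' r hφr).ne'))
    · refine integrable_comp_mul_of_mem_Icc (by fun_prop) exp_neg_sq_mem_Icc ?_ hφ
      exact ((integrable_exp_neg_sq_mul_radialDensity hμ).const_mul c).congr
        (.of_forall fun t ↦ mul_left_comm _ _ _)
    · by_cases ht : φ (Real.exp (-t ^ 2)) = 0
      · simp [ht]
      · exact mul_nonneg (hφ_nonneg _) (mul_nonneg (Real.exp_pos _).le (hpos' t ht).le)
  simp_rw [mul_left_comm _ c, integral_const_mul] at hint
  rw [integral_comp_exp_neg_sq_mul_radialDensity hdim hμ hφ, hzero, mul_zero] at hint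
  exact hint.false

theorem radialDensity_eq_zero_of_notMem (hdim : finrank ℝ V = 5)
    (hμ : Integrable fun η ↦ (charFun μ η).re / (1 + ‖η‖ ^ 2)) {S : Set ℝ} (hS : IsClosed S)
    (hμS : ∀ᵐ x ∂μ, ‖x‖ ∈ S) {r : ℝ} (hr : 0 < r) (hrS : r ∉ S) : radialDensity μ r = 0 := by
  by_contra hne
  have hU : Ioi 0 ∩ Sᶜ ∩ {t | 0 < radialDensity μ r * radialDensity μ t} ∈ 𝓝 r :=
    ((isOpen_Ioi.inter hS.isOpen_compl).inter (isOpen_lt continuous_const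
      (continuous_const.mul (continuous_radialDensity hμ)))).mem_nhds
        ⟨⟨hr, hrS⟩, mul_self_pos.2 hne⟩
  obtain ⟨ε, hε, hball⟩ := Metric.nhds_basis_closedBall.mem_iff.1 hU
  rw [Real.closedBall_eq_Icc] at hball
  have hleft : 0 < r - ε := (hball (left_mem_Icc.2 (by linarith))).1.1
  refine not_ae_norm_notMem_Ioo_of_radialDensity_pos hdim hμ hleft.le
    (by linarith : r - ε < r + ε) (fun t ht ↦ (hball (Ioo_subset_Icc_self ht)).2) ?_
  filter_upwards [hμS] with x hxS hx using (hball (Ioo_subset_Icc_self hx)).1.2 hxS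

theorem exists_pos_radialDensity_ne_zero (hdim : finrank ℝ V = 5) [NeZero μ]
    (hμ : Integrable fun η ↦ (charFun μ η).re / (1 + ‖η‖ ^ 2)) :
    ∃ r, 0 < r ∧ radialDensity μ r ≠ 0 := by
  by_contra! h
  have hzero (r : ℝ) : radialDensity μ r = 0 := by
    rcases eq_or_ne r 0 with rfl | hr
    · simp [radialDensity, sphereKernel]
    · exact radialDensity_abs μ r ▸ h _ (abs_pos.2 hr)
  have hlaplace := integral_exp_neg_mul_sq_mul_radialDensity hdim hμ one_pos
  simp_rw [hzero, mul_zero, integral_zero] at hlaplace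
  have hpos : 0 < ∫ x, Real.exp (-1 * ‖x‖ ^ 2) ∂μ :=
    integral_exp_pos (.of_mem_Icc 0 1 (by fun_prop)
      (.of_forall fun x ↦ by simpa using exp_neg_sq_mem_Icc ‖x‖))
  exact hlaplace.not_lt (by positivity)

theorem interior_nonempty_of_ae_norm_mem (hdim : finrank ℝ V = 5) [NeZero μ]
    (hμ : Integrable fun η ↦ (charFun μ η).re / (1 + ‖η‖ ^ 2)) {S : Set ℝ} (hS : IsClosed S)
    (hμS : ∀ᵐ x ∂μ, ‖x‖ ∈ S) : (interior S).Nonempty := by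
  obtain ⟨r, hr, hne⟩ := exists_pos_radialDensity_ne_zero hdim hμ
  have hopen : IsOpen (Ioi 0 ∩ {r | radialDensity μ r ≠ 0}) :=
    isOpen_Ioi.inter (isOpen_ne_fun (continuous_radialDensity hμ) continuous_const)
  refine ⟨r, interior_maximal (fun t ht ↦ ?_) hopen ⟨hr, hne⟩⟩
  by_contra htS
  exact ht.2 (radialDensity_eq_zero_of_notMem hdim hμ hS hμS ht.1 htS)

end RadialSupport

section LaplaceTransform

variable {X : Type*} [MeasurableSpace X] {μ : Measure X} [IsFiniteMeasure μ]

theorem exp_neg_mul_eq_integral_indicator {z : ℝ} (hz : 0 < z) {t : ℝ} (ht : 0 ≤ t) :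
    Real.exp (-z * t) =
      ∫ σ in Ioi 0, z * Real.exp (-z * σ) * (Ioi t).indicator (fun _ ↦ 1) σ := by
  have hind (σ : ℝ) : z * Real.exp (-z * σ) * (Ioi t).indicator (fun _ ↦ 1) σ =
      (Ioi t).indicator (fun σ ↦ z * Real.exp (-z * σ)) σ := by
    by_cases h : σ ∈ Ioi t <;> simp [h]
  simp_rw [hind]
  rw [setIntegral_indicator measurableSet_Ioi, inter_eq_self_of_subset_right (Ioi_subset_Ioi ht),
    integral_const_mul, integral_exp_mul_Ioi (neg_neg_of_pos hz)]
  field_simp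

theorem integral_exp_neg_mul_eq_integral_measureReal_lt {f : X → ℝ} (hf : Measurable f)
    (hf_nonneg : ∀ x, 0 ≤ f x) {z : ℝ} (hz : 0 < z) :
    ∫ x, Real.exp (-z * f x) ∂μ =
      ∫ σ in Ioi 0, z * Real.exp (-z * σ) * μ.real {x | f x < σ} := by
  have hmeas : MeasurableSet {p : X × ℝ | f p.1 < p.2} :=
    measurableSet_lt (hf.comp measurable_fst) measurable_snd
  have hint : Integrable (Function.uncurry fun x σ ↦
      z * Real.exp (-z * σ) * (Ioi (f x)).indicator (fun _ ↦ (1 : ℝ)) σ)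
      (μ.prod (volume.restrict (Ioi 0))) := by
    refine (((integrableOn_exp_mul_Ioi (neg_neg_of_pos hz) 0).const_mul z).comp_snd μ).mul_bdd
      (c := 1) (g := {p : X × ℝ | f p.1 < p.2}.indicator fun _ ↦ (1 : ℝ))
      (measurable_const.indicator hmeas).aestronglyMeasurable (.of_forall fun p ↦ ?_)
    exact (norm_indicator_le_norm_self _ _).trans_eq norm_one
  calc ∫ x, Real.exp (-z * f x) ∂μ
      = ∫ x, (∫ σ in Ioi 0, z * Real.exp (-z * σ) * (Ioi (f x)).indicator (fun _ ↦ 1) σ) ∂μ := by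
        simp_rw [exp_neg_mul_eq_integral_indicator hz (hf_nonneg _)]
    _ = ∫ σ in Ioi 0, (∫ x, z * Real.exp (-z * σ) * (Ioi (f x)).indicator (fun _ ↦ 1) σ ∂μ) :=
        integral_integral_swap hint
    _ = _ := by
        congr with σ
        rw [integral_const_mul]
        congr 1
        exact integral_indicator_one (hf measurableSet_Iio)

theorem integral_exp_neg_mul_le_of_measureReal_lt_le {f : X → ℝ} (hf : Measurable f)
    (hf_nonneg : ∀ x, 0 ≤ f x) {C a : ℝ} (ha : -1 < a)
    (hμ : ∀ σ, 0 < σ → μ.real {x | f x < σ} ≤ C * σ ^ a) {z : ℝ} (hz : 0 < z) :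
    ∫ x, Real.exp (-z * f x) ∂μ ≤ C * Real.Gamma (a + 1) * z ^ (-a) := by
  have hint : IntegrableOn (fun σ ↦ z * C * (σ ^ a * Real.exp (-z * σ))) (Ioi 0) := by
    simpa only [IntegrableOn, Real.rpow_one] using
      Integrable.const_mul (integrableOn_rpow_mul_exp_neg_mul_rpow ha one_pos hz) (z * C)
  calc ∫ x, Real.exp (-z * f x) ∂μ
      = ∫ σ in Ioi 0, z * Real.exp (-z * σ) * μ.real {x | f x < σ} :=
        integral_exp_neg_mul_eq_integral_measureReal_lt hf hf_nonneg hz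
    _ ≤ ∫ σ in Ioi 0, z * C * (σ ^ a * Real.exp (-z * σ)) := by
        refine integral_mono_of_nonneg (.of_forall fun σ ↦ by positivity) hint ?_
        filter_upwards [ae_restrict_mem measurableSet_Ioi] with σ hσ
        calc z * Real.exp (-z * σ) * μ.real {x | f x < σ}
            ≤ z * Real.exp (-z * σ) * (C * σ ^ a) := by
              gcongr
              exact hμ σ hσ
          _ = _ := by ring
    _ = _ := by
        have hgamma := Real.integral_rpow_mul_exp_neg_mul_Ioi (neg_lt_iff_pos_add.1 ha) hz
        simp only [add_sub_cancel_right, ← neg_mul] at hgamma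
        rw [integral_const_mul, hgamma, one_div, Real.inv_rpow hz.le, Real.rpow_add_one hz.ne',
          Real.rpow_neg hz.le]
        field_simp

theorem integral_exp_neg_mul_sq_dist_le [PseudoMetricSpace X] [OpensMeasurableSpace X] {C s : ℝ}
    (hs : -2 < s) {x : X} (hμ : ∀ ρ, 0 < ρ → μ.real (Metric.closedBall x ρ) ≤ C * ρ ^ s)
    {z : ℝ} (hz : 0 < z) :
    ∫ y, Real.exp (-z * dist y x ^ 2) ∂μ ≤ C * Real.Gamma (s / 2 + 1) * z ^ (-(s / 2)) := by
  have hdist : Measurable fun y ↦ dist y x ^ 2 :=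
    (by fun_prop : Continuous fun y ↦ dist y x ^ 2).measurable
  refine integral_exp_neg_mul_le_of_measureReal_lt_le hdist (fun y ↦ sq_nonneg _) (by linarith)
    (fun σ hσ ↦ ?_) hz
  calc μ.real {y | dist y x ^ 2 < σ} ≤ μ.real (Metric.closedBall x √σ) :=
        measureReal_mono fun y hy ↦ (Real.lt_sqrt dist_nonneg).2 hy |>.le
    _ ≤ C * √σ ^ s := hμ _ (Real.sqrt_pos.2 hσ)
    _ = C * σ ^ (s / 2) := by
        rw [Real.sqrt_eq_rpow, ← Real.rpow_mul hσ.le]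
        ring_nf

end LaplaceTransform

section FourierEnergy

variable {V : Type*} [NormedAddCommGroup V] [InnerProductSpace ℝ V] [FiniteDimensional ℝ V]
  [MeasurableSpace V] [BorelSpace V] {μ : Measure V} [IsFiniteMeasure μ]

theorem integral_exp_neg_mul_sq_norm_mul_re_charFun_le {K α : ℝ}
    (hgauss : ∀ z, 0 < z → ∫ x, Real.exp (-z * ‖x‖ ^ 2) ∂μ ≤ K * z ^ (-(α / 2)))
    {δ : ℝ} (hδ : 0 < δ) :
    ∫ η, Real.exp (-δ * ‖η‖ ^ 2) * (charFun μ η).re ≤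
      Real.pi ^ (finrank ℝ V / 2 : ℝ) * K * 4 ^ (α / 2) * δ ^ ((α - finrank ℝ V) / 2) := by
  calc ∫ η, Real.exp (-δ * ‖η‖ ^ 2) * (charFun μ η).re
      = (Real.pi / δ) ^ (finrank ℝ V / 2 : ℝ) * ∫ x, Real.exp (-(1 / (4 * δ)) * ‖x‖ ^ 2) ∂μ := by
        rw [integral_exp_neg_mul_sq_norm_mul_re_charFun μ hδ]
        congr! 4 with x
        ring
    _ ≤ (Real.pi / δ) ^ (finrank ℝ V / 2 : ℝ) * (K * (1 / (4 * δ)) ^ (-(α / 2))) := by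
        gcongr
        exact hgauss _ (by positivity)
    _ = _ := by
        rw [Real.div_rpow (by positivity) hδ.le, one_div, Real.inv_rpow (by positivity),
          Real.rpow_neg (by positivity), inv_inv, Real.mul_rpow (by norm_num) hδ.le, sub_div,
          Real.rpow_sub hδ]
        ring

-- The weight is `∫ exp (-(1 + ‖η‖ ^ 2) * δ) dδ`, and for each `δ` Gaussian duality bounds the
-- integral over `η`.
theorem integrable_re_charFun_div_one_add_sq_norm (hnonneg : ∀ η, 0 ≤ (charFun μ η).re) {K α : ℝ}
    (hα : finrank ℝ V - 2 < α)
    (hgauss : ∀ z, 0 < z → ∫ x, Real.exp (-z * ‖x‖ ^ 2) ∂μ ≤ K * z ^ (-(α / 2))) :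
    Integrable fun η ↦ (charFun μ η).re / (1 + ‖η‖ ^ 2) := by
  have hcont := continuous_re_charFun μ
  have hsection (δ : ℝ) (hδ : 0 < δ) :
      Integrable fun η ↦ Real.exp (-δ * ‖η‖ ^ 2) * (charFun μ η).re :=
    (integrable_exp_neg_mul_sq_norm hδ).mul_bdd hcont.aestronglyMeasurable
      (.of_forall fun η ↦ (Complex.abs_re_le_norm _).trans (norm_charFun_le η))
  have hmeas : AEStronglyMeasurable (fun p : ℝ × V ↦
      Real.exp (-p.1) * (Real.exp (-p.1 * ‖p.2‖ ^ 2) * (charFun μ p.2).re))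
      ((volume.restrict (Ioi 0)).prod volume) := by
    fun_prop
  have hprod : Integrable (fun p : ℝ × V ↦
      Real.exp (-p.1) * (Real.exp (-p.1 * ‖p.2‖ ^ 2) * (charFun μ p.2).re))
      ((volume.restrict (Ioi 0)).prod volume) := by
    refine (integrable_prod_iff hmeas).2 ⟨?_, ?_⟩
    · filter_upwards [ae_restrict_mem measurableSet_Ioi] with δ hδ
      exact (hsection δ hδ).const_mul _
    · have hgamma := (Real.GammaIntegral_convergent (s := (α - finrank ℝ V) / 2 + 1)
        (by linarith)).const_mul (Real.pi ^ (finrank ℝ V / 2 : ℝ) * K * 4 ^ (α / 2))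
      refine hgamma.mono' hmeas.norm.integral_prod_right' ?_
      filter_upwards [ae_restrict_mem measurableSet_Ioi] with δ hδ
      have hpos (η : V) : ‖Real.exp (-δ) * (Real.exp (-δ * ‖η‖ ^ 2) * (charFun μ η).re)‖ =
          Real.exp (-δ) * (Real.exp (-δ * ‖η‖ ^ 2) * (charFun μ η).re) :=
        Real.norm_of_nonneg (by have := hnonneg η; positivity)
      rw [Real.norm_of_nonneg (by positivity)]
      simp_rw [hpos, integral_const_mul]
      rw [mul_left_comm, add_sub_cancel_right]
      gcongr
      exact integral_exp_neg_mul_sq_norm_mul_re_charFun_le hgauss hδ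
  refine hprod.integral_prod_right.congr (.of_forall fun η ↦ ?_)
  have hexp (δ : ℝ) : Real.exp (-δ) * (Real.exp (-δ * ‖η‖ ^ 2) * (charFun μ η).re) =
      Real.exp (-(1 + ‖η‖ ^ 2) * δ) * (charFun μ η).re := by
    rw [← mul_assoc, ← Real.exp_add]
    ring_nf
  simp_rw [hexp]
  rw [integral_mul_const, integral_exp_mul_Ioi (by linarith [sq_nonneg ‖η‖])]
  rw [mul_zero, Real.exp_zero, neg_div_neg_eq, one_div_mul_eq_div]

end FourierEnergy

theorem isCompact_image2_dist {X : Type*} [PseudoMetricSpace X] {K : Set X} (hK : IsCompact K) :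
    IsCompact (image2 dist K K) := by
  rw [← image_uncurry_prod]
  exact (hK.prod hK).image continuous_dist

section DifferenceMeasure

variable {G : Type*} [Sub G] [MeasurableSpace G]

/-- The difference measure of `μ`, that is, the distribution of `x - y` when `(x, y)` is distributed
according to `μ.prod μ`. It is carried by `E - E` if `μ` is carried by `E`, and its Fourier
transform is `‖charFun μ‖ ^ 2`. -/
noncomputable def differenceMeasure (μ : Measure G) : Measure G :=
  (μ.prod μ).map fun p ↦ p.1 - p.2

variable {μ : Measure G} [IsFiniteMeasure μ]

instance : IsFiniteMeasure (differenceMeasure μ) :=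
  inferInstanceAs (IsFiniteMeasure ((μ.prod μ).map _))

instance [MeasurableSub₂ G] [NeZero μ] : NeZero (differenceMeasure μ) where
  out h := by
    rw [differenceMeasure, Measure.map_eq_zero_iff (by fun_prop), ← Measure.measure_univ_eq_zero,
      ← univ_prod_univ, Measure.prod_prod, mul_self_eq_zero, Measure.measure_univ_eq_zero] at h
    exact NeZero.ne μ h

variable {V : Type*} [NormedAddCommGroup V] [InnerProductSpace ℝ V] [FiniteDimensional ℝ V]
  [MeasurableSpace V] [BorelSpace V] {μ : Measure V}

theorem ae_differenceMeasure_norm_mem {K : Set V} (hK : IsCompact K) (hμK : ∀ᵐ x ∂μ, x ∈ K) :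
    ∀ᵐ x ∂differenceMeasure μ, ‖x‖ ∈ image2 dist K K := by
  have hmeas : MeasurableSet {x : V | ‖x‖ ∈ image2 dist K K} :=
    (isCompact_image2_dist hK).measurableSet.preimage measurable_norm
  refine (ae_map_iff (by fun_prop) hmeas).2 ?_
  filter_upwards [Measure.quasiMeasurePreserving_fst.ae hμK,
    Measure.quasiMeasurePreserving_snd.ae hμK] with p hp₁ hp₂
  exact ⟨p.1, hp₁, p.2, hp₂, dist_eq_norm _ _⟩

variable [IsFiniteMeasure μ]

theorem charFun_differenceMeasure (t : V) :
    charFun (differenceMeasure μ) t = (‖charFun μ t‖ ^ 2 : ℝ) := by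
  have hexp (p : V × V) : Complex.exp (⟪p.1 - p.2, t⟫ * Complex.I) =
      Complex.exp (⟪p.1, t⟫ * Complex.I) * Complex.exp (⟪p.2, -t⟫ * Complex.I) := by
    rw [inner_sub_left, inner_neg_right, ← Complex.exp_add]
    push_cast
    ring_nf
  rw [charFun_apply, differenceMeasure, integral_map (by fun_prop) (by fun_prop)]
  simp_rw [hexp]
  rw [integral_prod_mul (fun x ↦ Complex.exp (⟪x, t⟫ * Complex.I))
    (fun y ↦ Complex.exp (⟪y, -t⟫ * Complex.I)), ← charFun_apply, ← charFun_apply, charFun_neg,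
    Complex.mul_conj, Complex.normSq_eq_norm_sq]

theorem integral_exp_neg_mul_sq_norm_differenceMeasure_le {C α : ℝ} (hα : -2 < α)
    (hμ : ∀ x ρ, 0 < ρ → μ.real (Metric.closedBall x ρ) ≤ C * ρ ^ α) {z : ℝ} (hz : 0 < z) :
    ∫ x, Real.exp (-z * ‖x‖ ^ 2) ∂differenceMeasure μ ≤
      μ.real univ * (C * Real.Gamma (α / 2 + 1)) * z ^ (-(α / 2)) := by
  have hint : Integrable (fun p : V × V ↦ Real.exp (-z * ‖p.1 - p.2‖ ^ 2)) (μ.prod μ) :=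
    .of_mem_Icc 0 1 (by fun_prop) (.of_forall fun p ↦
      ⟨(Real.exp_pos _).le, Real.exp_le_one_iff.2 (by nlinarith [sq_nonneg ‖p.1 - p.2‖])⟩)
  calc ∫ x, Real.exp (-z * ‖x‖ ^ 2) ∂differenceMeasure μ
      = ∫ y, (∫ x, Real.exp (-z * dist x y ^ 2) ∂μ) ∂μ := by
        rw [differenceMeasure, integral_map (by fun_prop) (by fun_prop),
          integral_prod_symm _ hint]
        simp_rw [dist_eq_norm]
    _ ≤ ∫ _, C * Real.Gamma (α / 2 + 1) * z ^ (-(α / 2)) ∂μ := by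
        refine integral_mono_of_nonneg (.of_forall fun y ↦ by positivity) (integrable_const _)
          (.of_forall fun y ↦ integral_exp_neg_mul_sq_dist_le hα (hμ y) hz)
    _ = _ := by
        rw [integral_const, smul_eq_mul]
        ring

theorem interior_image2_dist_nonempty (hdim : finrank ℝ V = 5) [NeZero μ] {K : Set V}
    (hK : IsCompact K) (hμK : ∀ᵐ x ∂μ, x ∈ K) {C α : ℝ} (hα : 3 < α)
    (hμ : ∀ x ρ, 0 < ρ → μ.real (Metric.closedBall x ρ) ≤ C * ρ ^ α) :
    (interior (image2 dist K K)).Nonempty := by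
  have henergy : Integrable fun η ↦ (charFun (differenceMeasure μ) η).re / (1 + ‖η‖ ^ 2) := by
    refine integrable_re_charFun_div_one_add_sq_norm (fun η ↦ ?_) (α := α) ?_
      fun z hz ↦ integral_exp_neg_mul_sq_norm_differenceMeasure_le (by linarith) hμ hz
    · rw [charFun_differenceMeasure, Complex.ofReal_re]
      positivity
    · rw [hdim]
      push_cast
      linarith
  exact interior_nonempty_of_ae_norm_mem hdim henergy
    (isCompact_image2_dist hK).isClosed (ae_differenceMeasure_norm_mem hK hμK)

end DifferenceMeasure

section Frostman

section HausdorffContent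

variable {X : Type*} [EMetricSpace X] {A : Set X} {s : ℝ} {r : ℝ≥0∞}

/-- The Hausdorff content at scale `r`: the greatest outer measure giving at most
`(diam t) ^ s` to every set `t` of diameter at most `r`. -/
noncomputable def hausdorffContent (X : Type*) [EMetricSpace X] (s : ℝ) (r : ℝ≥0∞) :
    OuterMeasure X :=
  OuterMeasure.mkMetric'.pre (fun t ↦ Metric.ediam t ^ s) r

theorem hausdorffContent_le {t : Set X} (ht : Metric.ediam t ≤ r) :
    hausdorffContent X s r t ≤ Metric.ediam t ^ s :=
  OuterMeasure.mkMetric'.pre_le ht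

theorem exists_hausdorffContent_ne_zero [MeasurableSpace X] [BorelSpace X]
    (hμA : Measure.hausdorffMeasure s A ≠ 0) : ∃ r > 0, hausdorffContent X s r A ≠ 0 := by
  rw [Measure.hausdorffMeasure, ← Measure.coe_toOuterMeasure, Measure.mkMetric_toOuterMeasure,
    OuterMeasure.mkMetric, OuterMeasure.mkMetric', OuterMeasure.iSup_apply] at hμA
  simpa only [hausdorffContent, OuterMeasure.iSup_apply, ne_eq, ENNReal.iSup_eq_zero, not_forall,
    exists_prop] using hμA

theorem hausdorffContent_ne_top (hA : IsCompact A) (hs : 0 ≤ s) (hr : 0 < r) :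
    hausdorffContent X s r A ≠ ⊤ := by
  refine (hA.induction_on (p := fun t ↦ hausdorffContent X s r t < ⊤) (by simp)
    (fun _ _ htu hu ↦ (measure_mono htu).trans_lt hu)
    (fun t u ht hu ↦ (measure_union_le t u).trans_lt (ENNReal.add_lt_top.2 ⟨ht, hu⟩))
    fun x _ ↦ ⟨Metric.eball x (min 1 (r / 2)), mem_nhdsWithin_of_mem_nhds
      (Metric.eball_mem_nhds x (lt_min one_pos (ENNReal.half_pos hr.ne'))), ?_⟩).ne
  have hdiam : Metric.ediam (Metric.eball x (min 1 (r / 2))) ≤ 2 * min 1 (r / 2) :=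
    Metric.ediam_eball_le
  have hdiam_r : 2 * min 1 (r / 2) ≤ r :=
    (mul_le_mul_right (min_le_right _ _) 2).trans_eq (ENNReal.mul_div_cancel two_ne_zero (by simp))
  have hdiam_two : 2 * min 1 (r / 2) ≤ 2 := mul_le_of_le_one_right' (min_le_left _ _)
  exact (hausdorffContent_le (hdiam.trans hdiam_r)).trans_lt
    (ENNReal.rpow_lt_top_of_nonneg hs (ne_top_of_le_ne_top (by simp) (hdiam.trans hdiam_two)))

theorem hausdorffContent_inter_le (hs : 0 ≤ s) (hr : 0 < r) (t : Set X) :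
    hausdorffContent X s r (t ∩ A) ≤
      (1 + hausdorffContent X s r A / r ^ s) * Metric.ediam t ^ s := by
  rcases le_or_gt (Metric.ediam t) r with ht | ht
  · calc hausdorffContent X s r (t ∩ A) ≤ hausdorffContent X s r t :=
          measure_mono inter_subset_left
      _ ≤ 1 * Metric.ediam t ^ s := (hausdorffContent_le ht).trans_eq (one_mul _).symm
      _ ≤ _ := by
        gcongr
        exact le_self_add
  · have hrs : r ^ s ≠ 0 := (ENNReal.rpow_pos hr ht.ne_top).ne'
    calc hausdorffContent X s r (t ∩ A) ≤ hausdorffContent X s r A :=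
          measure_mono inter_subset_right
      _ = hausdorffContent X s r A / r ^ s * r ^ s :=
        (ENNReal.div_mul_cancel hrs (ENNReal.rpow_ne_top_of_nonneg hs ht.ne_top)).symm
      _ ≤ _ := by
        gcongr
        exact le_add_self

theorem exists_outerMeasure_le_ediam_rpow [MeasurableSpace X] [BorelSpace X] (hA : IsCompact A)
    (hs : 0 ≤ s) (hμA : Measure.hausdorffMeasure s A ≠ 0) :
    ∃ P : OuterMeasure X, P univ ≠ 0 ∧ P univ ≠ ⊤ ∧ P Aᶜ = 0 ∧
      ∃ C ≠ ⊤, ∀ t, P t ≤ C * Metric.ediam t ^ s := by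
  obtain ⟨r, hr, hrA⟩ := exists_hausdorffContent_ne_zero hμA
  have hrA_top := hausdorffContent_ne_top hA hs hr
  have hrs : r ^ s ≠ 0 := by simp [hr.ne', hs.not_gt]
  have hrestrict (t : Set X) : OuterMeasure.restrict A (hausdorffContent X s r) t =
      hausdorffContent X s r (t ∩ A) := OuterMeasure.restrict_apply A t _
  refine ⟨OuterMeasure.restrict A (hausdorffContent X s r), ?_, ?_, ?_,
    1 + hausdorffContent X s r A / r ^ s, ?_, fun t ↦ ?_⟩
  · rwa [hrestrict, univ_inter]
  · rwa [hrestrict, univ_inter]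
  · rw [hrestrict, compl_inter_self, measure_empty]
  · exact ENNReal.add_ne_top.2 ⟨ENNReal.one_ne_top, ENNReal.div_ne_top hrA_top hrs⟩
  · rw [hrestrict]
    exact hausdorffContent_inter_le hs hr t

end HausdorffContent

/-- The distribution function of an outer measure on the line. It is monotone but need not be
right-continuous, and passing to the associated Stieltjes measure is what turns a finite outer
measure into a measure. -/
noncomputable def outerCdf (P : OuterMeasure ℝ) (x : ℝ) : ℝ :=
  (P (Iic x)).toReal

variable {P : OuterMeasure ℝ}

theorem ofReal_outerCdf (hP : P univ ≠ ⊤) (x : ℝ) :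
    ENNReal.ofReal (outerCdf P x) = P (Iic x) :=
  ENNReal.ofReal_toReal (ne_top_of_le_ne_top hP (measure_mono (subset_univ _)))

theorem outerCdf_nonneg (x : ℝ) : 0 ≤ outerCdf P x :=
  ENNReal.toReal_nonneg

theorem monotone_outerCdf (hP : P univ ≠ ⊤) : Monotone (outerCdf P) := fun _ _ hxy ↦
  ENNReal.toReal_mono (ne_top_of_le_ne_top hP (measure_mono (subset_univ _)))
    (measure_mono (Iic_subset_Iic.2 hxy))

theorem ofReal_outerCdf_sub_le (hP : P univ ≠ ⊤) (x y : ℝ) :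
    ENNReal.ofReal (outerCdf P y - outerCdf P x) ≤ P (Icc x y) := by
  rw [ENNReal.ofReal_sub _ (outerCdf_nonneg x), ofReal_outerCdf hP, ofReal_outerCdf hP,
    tsub_le_iff_left]
  exact (measure_mono fun z hz ↦ (le_total z x).imp id fun h ↦ ⟨h, hz⟩).trans
    (measure_union_le (Iic x) (Icc x y))

/-- The Stieltjes measure of the distribution function of a finite outer measure `P`. It bounds
closed intervals by the `P`-measure of slightly larger ones, and keeps the total mass of `P`. -/
noncomputable def outerStieltjes (hP : P univ ≠ ⊤) : Measure ℝ :=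
  (monotone_outerCdf hP).stieltjesFunction.measure

theorem outerStieltjes_Icc_le (hP : P univ ≠ ⊤) {x' x y y' : ℝ} (hx : x' < x) (hy : y < y') :
    outerStieltjes hP (Icc x y) ≤ P (Icc x' y') := by
  have hmono := monotone_outerCdf hP
  calc outerStieltjes hP (Icc x y) ≤ outerStieltjes hP (Ioc x' y) :=
        measure_mono fun z hz ↦ ⟨hx.trans_le hz.1, hz.2⟩
    _ ≤ ENNReal.ofReal (outerCdf P y' - outerCdf P x') := by
        rw [outerStieltjes, StieltjesFunction.measure_Ioc, hmono.stieltjesFunction_eq,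
          hmono.stieltjesFunction_eq]
        gcongr
        · exact hmono.rightLim_le hy
        · exact hmono.le_rightLim le_rfl
    _ ≤ P (Icc x' y') := ofReal_outerCdf_sub_le hP _ _

instance (hP : P univ ≠ ⊤) :
    IsFiniteMeasure (outerStieltjes hP) := by
  have hmono := monotone_outerCdf hP
  refine StieltjesFunction.isFiniteMeasure_of_forall_abs_le (C := (P univ).toReal) _ fun x ↦ ?_
  rw [hmono.stieltjesFunction_eq,
    abs_of_nonneg ((outerCdf_nonneg x).trans (hmono.le_rightLim le_rfl))]
  exact (hmono.rightLim_le (lt_add_one x)).trans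
    (ENNReal.toReal_mono hP (measure_mono (subset_univ _)))

theorem ofReal_outerCdf_sub_le_outerStieltjes_univ (hP : P univ ≠ ⊤) (x y : ℝ) :
    ENNReal.ofReal (outerCdf P y - outerCdf P x) ≤ outerStieltjes hP univ := by
  have hmono := monotone_outerCdf hP
  calc ENNReal.ofReal (outerCdf P y - outerCdf P x) ≤ outerStieltjes hP (Ioc (x - 1) y) := by
        rw [outerStieltjes, StieltjesFunction.measure_Ioc, hmono.stieltjesFunction_eq,
          hmono.stieltjesFunction_eq]
        gcongr
        · exact hmono.le_rightLim le_rfl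
        · exact hmono.rightLim_le (sub_one_lt x)
    _ ≤ outerStieltjes hP univ := measure_mono (subset_univ _)

theorem measure_univ_le_outerStieltjes_univ (hP : P univ ≠ ⊤) {x y : ℝ}
    (hxy : P (Ioc x y)ᶜ = 0) : P univ ≤ outerStieltjes hP univ := by
  have hx : outerCdf P x = 0 := by
    have hnull : P (Iic x) = 0 :=
      measure_mono_null (t := (Ioc x y)ᶜ) (fun z hz h ↦ h.1.not_ge hz) hxy
    rw [outerCdf, hnull, ENNReal.toReal_zero]
  have hy : P univ ≤ P (Iic y) := by
    calc P univ ≤ P (Iic y ∪ (Ioc x y)ᶜ) :=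
          measure_mono fun z _ ↦ (le_or_gt z y).imp id fun h h' ↦ h.not_ge h'.2
      _ ≤ P (Iic y) + P (Ioc x y)ᶜ := measure_union_le _ _
      _ = P (Iic y) := by rw [hxy, add_zero]
  calc P univ ≤ P (Iic y) := hy
    _ = ENNReal.ofReal (outerCdf P y - outerCdf P x) := by rw [hx, sub_zero, ofReal_outerCdf hP]
    _ ≤ outerStieltjes hP univ := ofReal_outerCdf_sub_le_outerStieltjes_univ hP x y

theorem ae_outerStieltjes_mem (hP : P univ ≠ ⊤) {A : Set ℝ} (hA : IsClosed A)
    (hPA : P Aᶜ = 0) : ∀ᵐ x ∂outerStieltjes hP, x ∈ A := by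
  refine measure_null_of_locally_null _ fun x hx ↦ ?_
  obtain ⟨ε, hε, hball⟩ := Metric.nhds_basis_closedBall.mem_iff.1 (hA.isOpen_compl.mem_nhds hx)
  rw [Real.closedBall_eq_Icc] at hball
  refine ⟨Icc (x - ε / 2) (x + ε / 2),
    mem_nhdsWithin_of_mem_nhds (Icc_mem_nhds (by linarith) (by linarith)), ?_⟩
  exact nonpos_iff_eq_zero.1 ((outerStieltjes_Icc_le hP (by linarith) (by linarith)).trans
    (measure_mono_null hball hPA).le)

theorem exists_measure_closedBall_le_of_hausdorffMeasure_ne_zero {A : Set ℝ} (hA : IsCompact A)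
    {s : ℝ} (hs : 0 ≤ s) (hμA : Measure.hausdorffMeasure s A ≠ 0) :
    ∃ μ : Measure ℝ, IsFiniteMeasure μ ∧ NeZero μ ∧ (∀ᵐ x ∂μ, x ∈ A) ∧
      ∃ C, ∀ x ρ, 0 < ρ → μ.real (Metric.closedBall x ρ) ≤ C * ρ ^ s := by
  obtain ⟨P, hP_ne, hP, hPA, C, hC, hPC⟩ := exists_outerMeasure_le_ediam_rpow hA hs hμA
  obtain ⟨L, hL⟩ := hA.isBounded.subset_ball 0
  rw [Real.ball_eq_Ioo] at hL
  have hPL : P (Ioc (0 - L) (0 + L))ᶜ = 0 :=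
    measure_mono_null (compl_subset_compl.2 (hL.trans Ioo_subset_Ioc_self)) hPA
  refine ⟨outerStieltjes hP, inferInstance, ⟨fun h ↦ hP_ne ?_⟩,
    ae_outerStieltjes_mem hP hA.isClosed hPA, C.toReal * 4 ^ s, fun x ρ hρ ↦ ?_⟩
  · simpa [h] using measure_univ_le_outerStieltjes_univ hP hPL
  refine ENNReal.toReal_le_of_le_ofReal (by positivity) ?_
  calc outerStieltjes hP (Metric.closedBall x ρ)
      ≤ P (Icc (x - 2 * ρ) (x + 2 * ρ)) := by
        rw [Real.closedBall_eq_Icc]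
        exact outerStieltjes_Icc_le hP (by linarith) (by linarith)
    _ ≤ C * ENNReal.ofReal (4 * ρ) ^ s := by
        refine (hPC _).trans_eq ?_
        rw [Real.ediam_Icc]
        ring_nf
    _ = ENNReal.ofReal (C.toReal * 4 ^ s * ρ ^ s) := by
        rw [mul_assoc, ← Real.mul_rpow (by norm_num) hρ.le,
          ENNReal.ofReal_mul ENNReal.toReal_nonneg, ENNReal.ofReal_toReal hC,
          ENNReal.ofReal_rpow_of_nonneg (by positivity) hs]

end Frostman

section ProductMeasure

variable {ι : Type*} [Fintype ι]

/-- The power `μ ^ ι` of a measure on the line, as a measure on Euclidean space. -/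
noncomputable def euclideanPi (ι : Type*) [Fintype ι] (μ : Measure ℝ) :
    Measure (EuclideanSpace ℝ ι) :=
  (Measure.pi fun _ : ι ↦ μ).map (WithLp.toLp 2)

variable {μ : Measure ℝ}

theorem euclideanPi_apply {E : Set (EuclideanSpace ℝ ι)} (hE : MeasurableSet E) :
    euclideanPi ι μ E = Measure.pi (fun _ ↦ μ) (WithLp.toLp 2 ⁻¹' E) :=
  Measure.map_apply (WithLp.measurable_toLp 2 _) hE

variable [IsFiniteMeasure μ]

instance : IsFiniteMeasure (euclideanPi ι μ) :=
  inferInstanceAs (IsFiniteMeasure ((Measure.pi _).map _))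

instance [NeZero μ] : NeZero (euclideanPi ι μ) where
  out h := by
    have huniv : euclideanPi ι μ univ = μ univ ^ Fintype.card ι := by
      rw [euclideanPi_apply .univ, preimage_univ, Measure.pi_univ, Finset.prod_const,
        Finset.card_univ]
    rw [h] at huniv
    exact pow_ne_zero _ (NeZero.ne (μ univ)) huniv.symm

theorem ae_euclideanPi_mem {A : Set ℝ} (hA : MeasurableSet A) (hμA : ∀ᵐ x ∂μ, x ∈ A) :
    ∀ᵐ x ∂euclideanPi ι μ, ∀ i, x i ∈ A := by
  have hmeas : MeasurableSet {x : EuclideanSpace ℝ ι | ∀ i, x i ∈ A} := by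
    simp only [ofPred_forall]
    exact .iInter fun i ↦ (by fun_prop : Measurable fun x : EuclideanSpace ℝ ι ↦ x i) hA
  exact (ae_map_iff (WithLp.measurable_toLp 2 _).aemeasurable hmeas).2
    (ae_all_iff.2 fun i ↦ (Measure.quasiMeasurePreserving_eval _ i).ae hμA)

theorem euclideanPi_real_closedBall_le {C s : ℝ}
    (hμ : ∀ x ρ, 0 < ρ → μ.real (Metric.closedBall x ρ) ≤ C * ρ ^ s) (x : EuclideanSpace ℝ ι)
    {ρ : ℝ} (hρ : 0 < ρ) :
    (euclideanPi ι μ).real (Metric.closedBall x ρ) ≤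
      C ^ Fintype.card ι * ρ ^ (Fintype.card ι * s) := by
  have hsub : WithLp.toLp 2 ⁻¹' Metric.closedBall x ρ ⊆ univ.pi fun i ↦ Metric.closedBall (x i) ρ :=
    fun y hy i _ ↦ (PiLp.dist_apply_le (WithLp.toLp 2 y) x i).trans hy
  calc (euclideanPi ι μ).real (Metric.closedBall x ρ)
      ≤ (Measure.pi fun _ ↦ μ).real (univ.pi fun i ↦ Metric.closedBall (x i) ρ) := by
        rw [measureReal_def, euclideanPi_apply measurableSet_closedBall]
        exact measureReal_mono hsub
    _ = ∏ i, μ.real (Metric.closedBall (x i) ρ) := by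
        simp only [measureReal_def, Measure.pi_pi, ENNReal.toReal_prod]
    _ ≤ ∏ _ : ι, C * ρ ^ s := Finset.prod_le_prod (fun _ _ ↦ measureReal_nonneg) fun i _ ↦ hμ _ _ hρ
    _ = _ := by
        rw [Finset.prod_const, Finset.card_univ, mul_pow, ← Real.rpow_natCast (ρ ^ s),
          ← Real.rpow_mul hρ.le, mul_comm s]

end ProductMeasure

section DistanceSet

theorem isCompact_prodSet {A : Set ℝ} (hA : IsCompact A) (n : ℕ) : IsCompact (prodSet A n) := by
  have himage : WithLp.toLp 2 '' (univ.pi fun _ : Fin n ↦ A) = prodSet A n := by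
    ext x
    exact ⟨by rintro ⟨y, hy, rfl⟩ i; exact hy i trivial, fun hx ↦ ⟨x.ofLp, fun i _ ↦ hx i, rfl⟩⟩
  exact himage ▸ (isCompact_univ_pi fun _ ↦ hA).image (PiLp.continuous_toLp 2 _)

theorem distSet_mono {n : ℕ} {E F : Set (EuclideanSpace ℝ (Fin n))} (hEF : E ⊆ F) :
    distSet E ⊆ distSet F :=
  image2_subset hEF hEF

theorem prodSet_mono {A B : Set ℝ} (hAB : A ⊆ B) (n : ℕ) : prodSet A n ⊆ prodSet B n :=
  fun _ hx i ↦ hAB (hx i)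

theorem monotone_distSet_prodSet {A : Set ℝ} (hA : A.Nonempty) :
    Monotone fun n ↦ distSet (prodSet A n) := by
  obtain ⟨a, ha⟩ := hA
  refine monotone_nat_of_le_succ fun n ↦ ?_
  rintro _ ⟨x, hx, y, hy, rfl⟩
  refine ⟨WithLp.toLp 2 (Fin.cons a x.ofLp), Fin.cases ha hx,
    WithLp.toLp 2 (Fin.cons a y.ofLp), Fin.cases ha hy, ?_⟩
  simp [EuclideanSpace.dist_eq, Fin.sum_univ_succ]

theorem interior_distSet_prodSet_five_nonempty {A : Set ℝ} (hA : IsCompact A)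
    (hdim : (3 : ℝ≥0∞) / 5 < dimH A) : (interior (distSet (prodSet A 5))).Nonempty := by
  obtain ⟨s, hs, hsA⟩ := ENNReal.lt_iff_exists_nnreal_btwn.1 hdim
  have hs' : (3 : ℝ) / 5 < s := by
    have := (ENNReal.toReal_lt_toReal (by finiteness) ENNReal.coe_ne_top).2 hs
    simpa using this
  have hne : Measure.hausdorffMeasure (s : ℝ) A ≠ 0 := by
    simp [hausdorffMeasure_of_lt_dimH hsA]
  obtain ⟨μ, _, _, hμA, C, hμ⟩ :=
    exists_measure_closedBall_le_of_hausdorffMeasure_ne_zero hA s.coe_nonneg hne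
  exact interior_image2_dist_nonempty (μ := euclideanPi (Fin 5) μ) (by simp)
    (isCompact_prodSet hA 5) (ae_euclideanPi_mem hA.measurableSet hμA)
    (by rw [Fintype.card_fin]; push_cast; linarith) fun x ρ ↦
      euclideanPi_real_closedBall_le hμ x

end DistanceSet

theorem mattila_sjolin_product_dim_ge_five_eighths_general (d : ℕ) (hd : 5 ≤ d) (A : Set ℝ)
    (hA : IsSigmaCompact A) (hdim : (3 : ℝ≥0∞) / 5 < dimH A) :
    (interior (distSet (prodSet A d))).Nonempty := by
  obtain ⟨K, hK, rfl⟩ := hA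
  rw [dimH_iUnion, lt_iSup_iff] at hdim
  obtain ⟨n, hn⟩ := hdim
  have hK_nonempty : (K n).Nonempty := by
    rw [nonempty_iff_ne_empty]
    intro h
    simp [h] at hn
  refine (interior_distSet_prodSet_five_nonempty (hK n) hn).mono (interior_mono ?_)
  exact (monotone_distSet_prodSet hK_nonempty hd).trans
    (distSet_mono (prodSet_mono (subset_iUnion K n) d))

theorem mattila_sjolin_product_dim_ge_five_eighths (d : ℕ) (hd : 5 ≤ d)
    (A : Set ℝ) (hA : IsCompact A) (hdim : (5 : ℝ≥0∞) / 8 ≤ dimH A) :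
    (interior (distSet (prodSet A d))).Nonempty := by
  refine mattila_sjolin_product_dim_ge_five_eighths_general d hd A hA.isSigmaCompact
    (lt_of_lt_of_le ?_ hdim)
  rw [← ENNReal.toReal_lt_toReal (by finiteness) (by finiteness)]
  norm_num
end
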